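/- Suppose 1 < p ≤ 2 and 0 < s ≤ 1, let p' be the conjugate exponent of p, and let g be holomorphic on the unit disc D. Then: (i) if the multiplication operator M_g maps the Besov space B^p into Q_s, then g ∈ Q_{s,log,1/p'} ∩ H^∞; (ii) if g ∈ Q_{s,log,α} ∩ H^∞ for some α > 1/2, then M_g maps B^p into Q_s. -/

import Mathlib

open MeasureTheory Metric Complex Real Filter Set

noncomputable section

/-- `f` is holomorphic on the open unit disc. -/
def HolOn (f : ℂ → ℂ) : Prop := DifferentiableOn ℂ f (Metric.ball (0:ℂ) 1)

/-- The normalized Lebesgue area measure on `ℂ` (so the unit disc has total mass 1). -/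
def dA : Measure ℂ := (ENNReal.ofReal π)⁻¹ • volume

/-- Bounded holomorphic functions on the unit disc. -/
def Hinf : Set (ℂ → ℂ) :=
  {f | HolOn f ∧ ∃ C : ℝ, ∀ z ∈ Metric.ball (0:ℂ) 1, ‖f z‖ ≤ C}

/-- The Bloch space. -/
def Bloch : Set (ℂ → ℂ) :=
  {f | HolOn f ∧ ∃ C : ℝ, ∀ z ∈ Metric.ball (0:ℂ) 1,
      (1 - ‖z‖ ^ 2) * ‖deriv f z‖ ≤ C}

/-- The little Bloch space: `(1-|z|²)|f'(z)| → 0` as `|z| → 1⁻`. -/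
def littleBloch : Set (ℂ → ℂ) :=
  {f | HolOn f ∧ ∀ ε : ℝ, 0 < ε → ∃ r : ℝ, r < 1 ∧ ∀ z ∈ Metric.ball (0:ℂ) 1,
      r < ‖z‖ → (1 - ‖z‖ ^ 2) * ‖deriv f z‖ < ε}

/-- The `α`-logarithmic Bloch space. -/
def BlochLog (α : ℝ) : Set (ℂ → ℂ) :=
  {f | HolOn f ∧ ∃ C : ℝ, ∀ z ∈ Metric.ball (0:ℂ) 1,
      (1 - ‖z‖ ^ 2) * (Real.log (2 / (1 - ‖z‖ ^ 2))) ^ α *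
        ‖deriv f z‖ ≤ C}

/-- The Besov space `B¹`: holomorphic `f` with `∫_D |f''| dA < ∞`. -/
def Besov1 : Set (ℂ → ℂ) :=
  {f | HolOn f ∧ ∫⁻ z in Metric.ball (0:ℂ) 1,
      ENNReal.ofReal (‖deriv (deriv f) z‖) ∂dA < ⊤}

/-- The Besov space `Bᵖ` (`1 < p < ∞`): `∫_D (1-|z|)^(p-2) |f'(z)|^p dA(z) < ∞`. -/
def Besov (p : ℝ) : Set (ℂ → ℂ) :=
  {f | HolOn f ∧ ∫⁻ z in Metric.ball (0:ℂ) 1,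
      ENNReal.ofReal ((1 - ‖z‖) ^ (p - 2) * ‖deriv f z‖ ^ p) ∂dA < ⊤}

open scoped Classical in
/-- The Besov space `Bᵖ` for all `1 ≤ p < ∞` (with the special definition at `p = 1`). -/
def BesovFull (p : ℝ) : Set (ℂ → ℂ) := if p = 1 then Besov1 else Besov p

/-- The Möbius transformation `φ_a(z) = (a-z)/(1 - conj a · z)`. -/
def phi (a z : ℂ) : ℂ := (a - z) / (1 - (starRingEnd ℂ) a * z)

/-- The space `Q_s`. -/
def Qs (s : ℝ) : Set (ℂ → ℂ) :=
  {f | HolOn f ∧ ⨆ a ∈ Metric.ball (0:ℂ) 1, ∫⁻ z in Metric.ball (0:ℂ) 1,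
      ENNReal.ofReal (‖deriv f z‖ ^ 2 *
        (1 - ‖phi a z‖ ^ 2) ^ s) ∂dA < ⊤}

/-- The space `Q_{s,log,α}`. -/
def QsLog (s α : ℝ) : Set (ℂ → ℂ) :=
  {f | HolOn f ∧ ⨆ a ∈ Metric.ball (0:ℂ) 1,
      (ENNReal.ofReal ((Real.log (2 / (1 - ‖a‖))) ^ (2 * α)) *
        ∫⁻ z in Metric.ball (0:ℂ) 1,
          ENNReal.ofReal (‖deriv f z‖ ^ 2 *
            (1 - ‖phi a z‖ ^ 2) ^ s) ∂dA) < ⊤}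

/-- The Volterra operator `T_g(f)(z) = ∫_0^z g'(ξ) f(ξ) dξ` (along the segment from 0 to z). -/
def Tg (g f : ℂ → ℂ) : ℂ → ℂ :=
  fun z => z * ∫ t in (0:ℝ)..1, deriv g ((t : ℂ) * z) * f ((t : ℂ) * z)

/-- The companion operator `I_g(f)(z) = ∫_0^z g(ξ) f'(ξ) dξ` (along the segment from 0 to z). -/
def Ig (g f : ℂ → ℂ) : ℂ → ℂ :=
  fun z => z * ∫ t in (0:ℝ)..1, g ((t : ℂ) * z) * deriv f ((t : ℂ) * z)

/-- The multiplication operator `M_g(f) = g · f`. -/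
def Mg (g f : ℂ → ℂ) : ℂ → ℂ := fun z => g z * f z

/-- `T` maps `X` into `Y`. -/
def MapsInto (T : (ℂ → ℂ) → (ℂ → ℂ)) (X Y : Set (ℂ → ℂ)) : Prop :=
  ∀ f ∈ X, T f ∈ Y

/-- The Hardy space `H^q`. -/
def Hardy (q : ℝ) : Set (ℂ → ℂ) :=
  {f | HolOn f ∧ ∃ C : ℝ, ∀ r : ℝ, 0 < r → r < 1 →
      (1 / (2 * π)) * ∫ t in (0:ℝ)..(2 * π),
        ‖f ((r : ℂ) * Complex.exp ((t : ℂ) * Complex.I))‖ ^ q ≤ C}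

/-- An inner function: bounded holomorphic with radial boundary values of modulus 1 a.e. -/
def IsInner (g : ℂ → ℂ) : Prop :=
  g ∈ Hinf ∧ ∀ᵐ t : ℝ ∂(volume.restrict (Set.Ioc (0:ℝ) (2 * π))),
    Filter.Tendsto (fun r : ℝ => ‖g ((r : ℂ) * Complex.exp ((t : ℂ) * Complex.I))‖)
      (nhdsWithin 1 (Set.Iio 1)) (nhds 1)

/-- `X` has the f-property (division by inner functions). -/
def FProperty (X : Set (ℂ → ℂ)) : Prop :=
  ∀ h ∈ X, ∀ g : ℂ → ℂ, IsInner g →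
    (fun z => h z / g z) ∈ Hardy 1 → (fun z => h z / g z) ∈ X

/-- The space of multipliers `M(X,Y)`. -/
def Mult (X Y : Set (ℂ → ℂ)) : Set (ℂ → ℂ) :=
  {g | HolOn g ∧ ∀ f ∈ X, (fun z => g z * f z) ∈ Y}

end

/-!
For `f ∈ B^p` write `(g f)' = f(a) g' + g' (f - f(a)) + g f'`. If `g ∈ Q_s ∩ H^∞`, the last two
terms are bounded in `L²((1 - |φ_a|²)^s dA)` by a multiple of `‖f‖_{B^p}`, uniformly in `a`: the
point is that `|f(z) - f(a)|² (1 - |φ_a(z)|²)^s` is dominated by an integral of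
`|f'(v)|² (1 - |φ_z(v)|²)^s`, and the order of integration can be exchanged. So `M_g` maps `B^p`
into `Q_s` exactly when `|f(a)|` times the `L²((1 - |φ_a|²)^s dA)` norm of `g'` stays bounded in
`a`. By duality with the kernel `1 / (1 - conj a z)`, functions in `B^p` grow at most like
`log (2 / (1 - |a|)) ^ (1 / p')`, and normalized logarithms attain this rate. Testing `M_g`, which
is bounded by the uniform boundedness principle, on the Möbius maps `φ_a` gives `g ∈ H^∞`, and
testing it on these logarithms gives `g ∈ Q_{s,log,1/p'}`. Hence the conditions in (i) are also
sufficient, and (ii) follows because `1 / p' ≤ 1 / 2 < α`.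
-/

noncomputable section
open scoped ENNReal NNReal ComplexConjugate

local notation "𝔻" => Metric.ball (0 : ℂ) 1

/-! ### Möbius transformations of the disc -/

lemma one_sub_norm_sq_pos {z : ℂ} (hz : z ∈ 𝔻) : 0 < 1 - ‖z‖ ^ 2 := by
  have := mem_ball_zero_iff.mp hz
  nlinarith [norm_nonneg z]

lemma one_sub_conj_mul_ne_zero {a z : ℂ} (ha : a ∈ 𝔻) (hz : z ∈ 𝔻) : 1 - conj a * z ≠ 0 := by
  have ha' := mem_ball_zero_iff.mp ha
  have hz' := mem_ball_zero_iff.mp hz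
  intro h
  have h1 : ‖conj a * z‖ = 1 := by rw [← sub_eq_zero.mp h, norm_one]
  rw [norm_mul, RCLike.norm_conj] at h1
  nlinarith [norm_nonneg a, norm_nonneg z]

lemma norm_one_sub_conj_mul_sq (a z : ℂ) :
    ‖1 - conj a * z‖ ^ 2 = ‖a - z‖ ^ 2 + (1 - ‖a‖ ^ 2) * (1 - ‖z‖ ^ 2) := by
  simp only [← Complex.normSq_eq_norm_sq, Complex.normSq_apply, sub_re, sub_im, one_re, one_im,
    mul_re, mul_im, conj_re, conj_im]
  ring

lemma one_sub_norm_phi_sq {a z : ℂ} (ha : a ∈ 𝔻) (hz : z ∈ 𝔻) :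
    1 - ‖phi a z‖ ^ 2 = (1 - ‖a‖ ^ 2) * (1 - ‖z‖ ^ 2) / ‖1 - conj a * z‖ ^ 2 := by
  have h : ‖1 - conj a * z‖ ^ 2 ≠ 0 :=
    pow_ne_zero 2 (norm_ne_zero_iff.mpr (one_sub_conj_mul_ne_zero ha hz))
  rw [phi, norm_div, div_pow, eq_div_iff h, sub_mul, div_mul_cancel₀ _ h]
  linarith [norm_one_sub_conj_mul_sq a z]

lemma phi_mem_disc {a z : ℂ} (ha : a ∈ 𝔻) (hz : z ∈ 𝔻) : phi a z ∈ 𝔻 := by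
  have h : 0 < 1 - ‖phi a z‖ ^ 2 := by
    rw [one_sub_norm_phi_sq ha hz]
    have := norm_pos_iff.mpr (one_sub_conj_mul_ne_zero ha hz)
    exact div_pos (mul_pos (one_sub_norm_sq_pos ha) (one_sub_norm_sq_pos hz)) (by positivity)
  rw [mem_ball_zero_iff]
  nlinarith [norm_nonneg (phi a z)]

lemma norm_phi_comm (a z : ℂ) : ‖phi a z‖ = ‖phi z a‖ := by
  have h : ‖1 - conj a * z‖ = ‖1 - conj z * a‖ := by
    rw [← RCLike.norm_conj]
    simp only [map_sub, map_one, map_mul, Complex.conj_conj, mul_comm]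
  rw [phi, phi, norm_div, norm_div, norm_sub_rev, h]

lemma phi_zero_left (z : ℂ) : phi 0 z = -z := by simp [phi]

lemma phi_zero_right (a : ℂ) : phi a 0 = a := by simp [phi]

lemma phi_self (a : ℂ) : phi a a = 0 := by simp [phi]

lemma phi_phi {a z : ℂ} (ha : a ∈ 𝔻) (hz : z ∈ 𝔻) : phi a (phi a z) = z := by
  have hz0 := one_sub_conj_mul_ne_zero ha hz
  have ha0 := one_sub_conj_mul_ne_zero ha ha
  have hnum : a - phi a z = z * (1 - conj a * a) / (1 - conj a * z) := by
    rw [phi, eq_div_iff hz0, sub_mul, div_mul_cancel₀ _ hz0]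
    ring
  have hden : 1 - conj a * phi a z = (1 - conj a * a) / (1 - conj a * z) := by
    rw [phi, eq_div_iff hz0, sub_mul, mul_assoc, div_mul_cancel₀ _ hz0]
    ring
  rw [phi, hnum, hden, div_div_div_cancel_right₀ hz0, mul_div_cancel_right₀ _ ha0]

lemma phi_image_disc {a : ℂ} (ha : a ∈ 𝔻) : phi a '' 𝔻 = 𝔻 :=
  Subset.antisymm (image_subset_iff.mpr fun _ => phi_mem_disc ha)
    fun w hw => ⟨phi a w, phi_mem_disc ha hw, phi_phi ha hw⟩

lemma injOn_phi {a : ℂ} (ha : a ∈ 𝔻) : InjOn (phi a) 𝔻 :=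
  LeftInvOn.injOn fun _ => phi_phi ha

lemma hasDerivAt_phi {a z : ℂ} (ha : a ∈ 𝔻) (hz : z ∈ 𝔻) :
    HasDerivAt (phi a) (-(1 - conj a * a) / (1 - conj a * z) ^ 2) z := by
  have hnum : HasDerivAt (fun z : ℂ => a - z) (-1) z := (hasDerivAt_id z).const_sub a
  have hden : HasDerivAt (fun z : ℂ => 1 - conj a * z) (-conj a) z := by
    simpa only [mul_one, id] using ((hasDerivAt_id z).const_mul (conj a)).const_sub 1
  refine (hnum.div hden (one_sub_conj_mul_ne_zero ha hz)).congr_deriv ?_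
  ring

lemma norm_deriv_phi_mul {a z : ℂ} (ha : a ∈ 𝔻) (hz : z ∈ 𝔻) :
    ‖deriv (phi a) z‖ * (1 - ‖z‖ ^ 2) = 1 - ‖phi a z‖ ^ 2 := by
  have h : ‖1 - conj a * a‖ = 1 - ‖a‖ ^ 2 := by
    rw [Complex.conj_mul', ← ofReal_pow, ← ofReal_one, ← ofReal_sub, Complex.norm_real,
      Real.norm_of_nonneg (one_sub_norm_sq_pos ha).le]
  rw [(hasDerivAt_phi ha hz).deriv, one_sub_norm_phi_sq ha hz, norm_div, norm_neg, norm_pow, h]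
  ring

lemma measurable_uncurry_phi : Measurable (Function.uncurry phi) := by
  unfold phi Function.uncurry
  have : Measurable fun q : ℂ × ℂ => conj q.1 :=
    Complex.continuous_conj.measurable.comp measurable_fst
  fun_prop

/-! ### Holomorphic functions on the disc -/

lemma HolOn.differentiableAt {f : ℂ → ℂ} (hf : HolOn f) {z : ℂ} (hz : z ∈ 𝔻) :
    DifferentiableAt ℂ f z :=
  DifferentiableOn.differentiableAt hf (isOpen_ball.mem_nhds hz)

lemma HolOn.deriv {f : ℂ → ℂ} (hf : HolOn f) : HolOn (deriv f) :=
  DifferentiableOn.deriv hf isOpen_ball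

lemma holOn_phi {a : ℂ} (ha : a ∈ 𝔻) : HolOn (phi a) := fun _ hz =>
  (hasDerivAt_phi ha hz).differentiableAt.differentiableWithinAt

lemma HolOn.comp_phi {f : ℂ → ℂ} (hf : HolOn f) {a : ℂ} (ha : a ∈ 𝔻) :
    HolOn (fun z => f (phi a z)) :=
  DifferentiableOn.comp hf (holOn_phi ha) fun _ => phi_mem_disc ha

lemma deriv_comp_phi {f : ℂ → ℂ} (hf : HolOn f) {a z : ℂ} (ha : a ∈ 𝔻) (hz : z ∈ 𝔻) :
    deriv (fun z => f (phi a z)) z = deriv f (phi a z) * deriv (phi a) z :=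
  ((hf.differentiableAt (phi_mem_disc ha hz)).hasDerivAt.comp z
    ((holOn_phi ha).differentiableAt hz).hasDerivAt).deriv

/-! ### Conformal change of variables -/

lemma restrict_dA (S : Set ℂ) : dA.restrict S = (ENNReal.ofReal π)⁻¹ • volume.restrict S := by
  rw [dA, Measure.restrict_smul]

lemma abs_det_restrictScalars_toSpanSingleton (c : ℂ) :
    |((ContinuousLinearMap.toSpanSingleton ℂ c).restrictScalars ℝ).det| = ‖c‖ ^ 2 := by
  have h : ((ContinuousLinearMap.toSpanSingleton ℂ c).restrictScalars ℝ).det = ‖c‖ ^ 2 := by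
    simp [ContinuousLinearMap.det, LinearMap.det_restrictScalars, Algebra.norm_complex_apply,
      Complex.normSq_eq_norm_sq]
  rw [h, abs_of_nonneg (sq_nonneg _)]

lemma setLIntegral_image_dA {ψ : ℂ → ℂ} {S : Set ℂ} (hS : MeasurableSet S)
    (hψ : ∀ z ∈ S, DifferentiableAt ℂ ψ z) (hinj : InjOn ψ S) (F : ℂ → ℝ≥0∞) :
    ∫⁻ z in ψ '' S, F z ∂dA = ∫⁻ z in S, ‖deriv ψ z‖ₑ ^ 2 * F (ψ z) ∂dA := by
  rw [restrict_dA, restrict_dA, lintegral_smul_measure, lintegral_smul_measure,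
    lintegral_image_eq_lintegral_abs_det_fderiv_mul volume hS
      (fun z hz => ((hψ z hz).hasDerivAt.hasFDerivAt.restrictScalars ℝ).hasFDerivWithinAt) hinj]
  congr 1
  refine setLIntegral_congr_fun hS fun z _ => ?_
  rw [abs_det_restrictScalars_toSpanSingleton, ENNReal.ofReal_pow (norm_nonneg _),
    ofReal_norm]

lemma setLIntegral_comp_phi {a : ℂ} (ha : a ∈ 𝔻) (F : ℂ → ℝ≥0∞) :
    ∫⁻ z in 𝔻, F z ∂dA = ∫⁻ z in 𝔻, ‖deriv (phi a) z‖ₑ ^ 2 * F (phi a z) ∂dA := by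
  conv_lhs => rw [← phi_image_disc ha]
  exact setLIntegral_image_dA measurableSet_ball
    (fun z hz => (holOn_phi ha).differentiableAt hz) (injOn_phi ha) F

/-! ### Weighted measures on the disc -/

/-- The weight `(1 - |z|²)^τ` on the disc, a power of the reciprocal of the hyperbolic density. -/
def discWeight (τ : ℝ) (z : ℂ) : ℝ≥0∞ := ENNReal.ofReal ((1 - ‖z‖ ^ 2) ^ τ)

/-- The measure `(1 - |φ_a(z)|²)^τ dA(z)` on the disc. Taking `a = 0` gives the radial measure
`(1 - |z|²)^τ dA(z)`. -/
def discMeasure (τ : ℝ) (a : ℂ) : Measure ℂ :=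
  (dA.restrict 𝔻).withDensity fun z => discWeight τ (phi a z)

/-- The Besov seminorm of `B^p`, written with the weight `(1 - |z|²)^(p - 2)` instead of the
comparable `(1 - |z|)^(p - 2)` because the former is Möbius invariant. -/
def besovNorm (p : ℝ) (f : ℂ → ℂ) : ℝ≥0∞ :=
  eLpNorm (deriv f) (ENNReal.ofReal p) (discMeasure (p - 2) 0)

/-- The square root of the integral at `a` whose supremum over `a` defines `Q_s`. -/
def qsNorm (s : ℝ) (f : ℂ → ℂ) (a : ℂ) : ℝ≥0∞ := eLpNorm (deriv f) 2 (discMeasure s a)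

lemma discWeight_zero (z : ℂ) : discWeight 0 z = 1 := by
  rw [discWeight, Real.rpow_zero, ENNReal.ofReal_one]

lemma discWeight_phi_zero (τ : ℝ) (z : ℂ) : discWeight τ (phi 0 z) = discWeight τ z := by
  rw [discWeight, discWeight, phi_zero_left, norm_neg]

lemma discWeight_phi_comm (τ : ℝ) (a z : ℂ) :
    discWeight τ (phi a z) = discWeight τ (phi z a) := by
  rw [discWeight, discWeight, norm_phi_comm]

lemma discWeight_le_one {τ : ℝ} (hτ : 0 ≤ τ) {z : ℂ} (hz : z ∈ 𝔻) : discWeight τ z ≤ 1 := by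
  rw [discWeight, ENNReal.ofReal_le_one]
  exact Real.rpow_le_one (one_sub_norm_sq_pos hz).le (by nlinarith [norm_nonneg z]) hτ

lemma measurable_discWeight (τ : ℝ) : Measurable (discWeight τ) := by
  unfold discWeight
  fun_prop

lemma measurable_discWeight_phi (τ : ℝ) (a : ℂ) : Measurable fun z => discWeight τ (phi a z) :=
  (measurable_discWeight τ).comp (measurable_uncurry_phi.comp measurable_prodMk_left)

lemma lintegral_discMeasure (τ : ℝ) (a : ℂ) (h : ℂ → ℝ≥0∞) :
    ∫⁻ z, h z ∂discMeasure τ a = ∫⁻ z in 𝔻, h z * discWeight τ (phi a z) ∂dA := by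
  rw [discMeasure, lintegral_withDensity_eq_lintegral_mul_non_measurable _
    (measurable_discWeight_phi τ a) (ae_of_all _ fun _ => ENNReal.ofReal_lt_top)]
  simp only [Pi.mul_apply, mul_comm]

lemma lintegral_discMeasure_zero (τ : ℝ) (h : ℂ → ℝ≥0∞) :
    ∫⁻ z, h z ∂discMeasure τ 0 = ∫⁻ z in 𝔻, h z * discWeight τ z ∂dA := by
  simp only [lintegral_discMeasure, discWeight_phi_zero]

lemma ae_mem_disc (τ : ℝ) (a : ℂ) : ∀ᵐ z ∂discMeasure τ a, z ∈ 𝔻 :=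
  (withDensity_absolutelyContinuous _ _).ae_le (ae_restrict_mem measurableSet_ball)

lemma HolOn.aestronglyMeasurable {f : ℂ → ℂ} (hf : HolOn f) (τ : ℝ) (a : ℂ) :
    AEStronglyMeasurable f (discMeasure τ a) :=
  (hf.continuousOn.aestronglyMeasurable measurableSet_ball).mono_ac
    (withDensity_absolutelyContinuous _ _)

lemma besovNorm_rpow {p : ℝ} (hp : 0 < p) (f : ℂ → ℂ) :
    besovNorm p f ^ p = ∫⁻ z in 𝔻, ‖deriv f z‖ₑ ^ p * discWeight (p - 2) z ∂dA := by
  rw [besovNorm, eLpNorm_eq_lintegral_rpow_enorm_toReal (ENNReal.ofReal_pos.mpr hp).ne'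
    ENNReal.ofReal_ne_top, ENNReal.toReal_ofReal hp.le, ← ENNReal.rpow_mul,
    one_div_mul_cancel hp.ne', ENNReal.rpow_one, lintegral_discMeasure_zero]

lemma eLpNorm_two_discMeasure_sq (h : ℂ → ℂ) (τ : ℝ) (a : ℂ) :
    eLpNorm h 2 (discMeasure τ a) ^ 2 = ∫⁻ z in 𝔻, ‖h z‖ₑ ^ 2 * discWeight τ (phi a z) ∂dA := by
  have := eLpNorm_nnreal_pow_eq_lintegral (f := h) (μ := discMeasure τ a) (p := 2) two_ne_zero
  rw [← lintegral_discMeasure]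
  simpa only [NNReal.coe_ofNat, ENNReal.rpow_two, ENNReal.coe_ofNat] using this

lemma qsNorm_sq (s : ℝ) (f : ℂ → ℂ) (a : ℂ) :
    qsNorm s f a ^ 2 = ∫⁻ z in 𝔻, ‖deriv f z‖ₑ ^ 2 * discWeight s (phi a z) ∂dA :=
  eLpNorm_two_discMeasure_sq (deriv f) s a

lemma rpow_le_two_rpow_abs {x : ℝ} (hx1 : 1 ≤ x) (hx2 : x ≤ 2) (t : ℝ) : x ^ t ≤ 2 ^ |t| :=
  (Real.rpow_le_rpow_of_exponent_le hx1 (le_abs_self t)).trans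
    (Real.rpow_le_rpow (by linarith) hx2 (abs_nonneg t))

lemma one_sub_norm_rpow_le {z : ℂ} (hz : z ∈ 𝔻) (t : ℝ) :
    (1 - ‖z‖) ^ t ≤ 2 ^ |t| * (1 - ‖z‖ ^ 2) ^ t := by
  have hz' := mem_ball_zero_iff.mp hz
  have h0 := norm_nonneg z
  have h1 : 0 < 1 - ‖z‖ := by linarith
  have hsplit : (1 - ‖z‖) ^ t = (1 + ‖z‖) ^ (-t) * (1 - ‖z‖ ^ 2) ^ t := by
    rw [show 1 - ‖z‖ ^ 2 = (1 + ‖z‖) * (1 - ‖z‖) by ring, Real.mul_rpow (by linarith) h1.le,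
      ← mul_assoc, ← Real.rpow_add (by linarith), neg_add_cancel, Real.rpow_zero, one_mul]
  rw [hsplit, ← abs_neg t]
  exact mul_le_mul_of_nonneg_right (rpow_le_two_rpow_abs (by linarith) (by linarith) _)
    (Real.rpow_nonneg (one_sub_norm_sq_pos hz).le t)

lemma one_sub_norm_sq_rpow_le {z : ℂ} (hz : z ∈ 𝔻) (t : ℝ) :
    (1 - ‖z‖ ^ 2) ^ t ≤ 2 ^ |t| * (1 - ‖z‖) ^ t := by
  have hz' := mem_ball_zero_iff.mp hz
  have h0 := norm_nonneg z
  have h1 : 0 < 1 - ‖z‖ := by linarith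
  rw [show 1 - ‖z‖ ^ 2 = (1 + ‖z‖) * (1 - ‖z‖) by ring, Real.mul_rpow (by linarith) h1.le]
  gcongr
  exact rpow_le_two_rpow_abs (by linarith) (by linarith) t

lemma mem_besov_iff {p : ℝ} (hp : 0 < p) {f : ℂ → ℂ} :
    f ∈ Besov p ↔ HolOn f ∧ besovNorm p f < ⊤ := by
  have hF (w : ℝ → ℝ) (z : ℂ) (hw : 0 ≤ w ‖z‖) : ENNReal.ofReal (w ‖z‖ * ‖deriv f z‖ ^ p) =
      ‖deriv f z‖ₑ ^ p * ENNReal.ofReal (w ‖z‖) := by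
    rw [ENNReal.ofReal_mul hw, mul_comm, ← ENNReal.ofReal_rpow_of_nonneg (norm_nonneg _) hp.le,
      ofReal_norm]
  have hcomp {u v : ℂ → ℝ≥0∞} (huv : ∀ z ∈ 𝔻, u z ≤ ENNReal.ofReal (2 ^ |p - 2|) * v z)
      (hv : ∫⁻ z in 𝔻, v z ∂dA < ⊤) : ∫⁻ z in 𝔻, u z ∂dA < ⊤ := by
    refine lt_of_le_of_lt (setLIntegral_mono' measurableSet_ball huv) ?_
    rw [lintegral_const_mul' _ _ ENNReal.ofReal_ne_top]
    exact ENNReal.mul_lt_top ENNReal.ofReal_lt_top hv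
  rw [← ENNReal.rpow_lt_top_iff_of_pos hp, besovNorm_rpow hp]
  refine and_congr_right fun _ => ⟨hcomp fun z hz => ?_, hcomp fun z hz => ?_⟩
  all_goals
    have hz' := mem_ball_zero_iff.mp hz
    rw [hF (fun r => (1 - r) ^ (p - 2)) z (by bound), mul_left_comm, discWeight,
      ← ENNReal.ofReal_mul (by positivity)]
    gcongr
  · exact one_sub_norm_sq_rpow_le hz _
  · exact one_sub_norm_rpow_le hz _

lemma setLIntegral_Qs_eq_qsNorm_sq (s : ℝ) (f : ℂ → ℂ) (a : ℂ) :
    ∫⁻ z in 𝔻, ENNReal.ofReal (‖deriv f z‖ ^ 2 * (1 - ‖phi a z‖ ^ 2) ^ s) ∂dA =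
      qsNorm s f a ^ 2 := by
  simp only [qsNorm_sq, discWeight, ENNReal.ofReal_mul (sq_nonneg _),
    ENNReal.ofReal_pow (norm_nonneg _), ofReal_norm]

lemma log_two_le_log_two_div {a : ℂ} (ha : a ∈ 𝔻) : Real.log 2 ≤ Real.log (2 / (1 - ‖a‖)) := by
  have ha' := mem_ball_zero_iff.mp ha
  refine Real.log_le_log two_pos ?_
  rw [le_div_iff₀ (by linarith)]
  linarith [norm_nonneg a]

lemma log_two_div_pos {a : ℂ} (ha : a ∈ 𝔻) : 0 < Real.log (2 / (1 - ‖a‖)) :=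
  (Real.log_pos one_lt_two).trans_le (log_two_le_log_two_div ha)

lemma mem_qsLog_iff {s α : ℝ} {f : ℂ → ℂ} :
    f ∈ QsLog s α ↔ HolOn f ∧ ∃ C : ℝ≥0, ∀ a ∈ 𝔻,
      ENNReal.ofReal (Real.log (2 / (1 - ‖a‖)) ^ α) * qsNorm s f a ≤ C := by
  have hsq (a : ℂ) (ha : a ∈ 𝔻) :
      ENNReal.ofReal (Real.log (2 / (1 - ‖a‖)) ^ (2 * α)) * qsNorm s f a ^ 2 =
        (ENNReal.ofReal (Real.log (2 / (1 - ‖a‖)) ^ α) * qsNorm s f a) ^ 2 := by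
    have hL := (log_two_div_pos ha).le
    rw [mul_pow, ← ENNReal.ofReal_pow (Real.rpow_nonneg hL α), ← Real.rpow_mul_natCast hL,
      mul_comm 2 α, Nat.cast_ofNat]
  simp only [QsLog, mem_ofPred_eq, setLIntegral_Qs_eq_qsNorm_sq]
  refine and_congr_right fun _ => ⟨fun h => ?_, fun ⟨C, hC⟩ => ?_⟩
  · obtain ⟨C, hC⟩ := ENNReal.lt_iff_exists_coe.mp h
    refine ⟨NNReal.sqrt C, fun a ha => ?_⟩
    rw [← ENNReal.pow_le_pow_left_iff two_ne_zero, ← ENNReal.coe_pow, NNReal.sq_sqrt, ← hsq a ha,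
      ← hC.1]
    exact le_iSup₂ (f := fun a _ => ENNReal.ofReal (Real.log (2 / (1 - ‖a‖)) ^ (2 * α)) *
      qsNorm s f a ^ 2) a ha
  · refine (iSup₂_le fun a ha => ?_).trans_lt (ENNReal.coe_lt_top (r := C ^ 2))
    rw [hsq a ha, ENNReal.coe_pow]
    exact pow_le_pow_left₀ zero_le (hC a ha) 2

lemma qsLog_zero (s : ℝ) : QsLog s 0 = Qs s := by
  simp only [QsLog, Qs, mul_zero, Real.rpow_zero, ENNReal.ofReal_one, one_mul]

lemma mem_qs_iff {s : ℝ} {f : ℂ → ℂ} :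
    f ∈ Qs s ↔ HolOn f ∧ ∃ C : ℝ≥0, ∀ a ∈ 𝔻, qsNorm s f a ≤ C := by
  simp only [← qsLog_zero, mem_qsLog_iff, Real.rpow_zero, ENNReal.ofReal_one, one_mul]

lemma qsLog_anti (s : ℝ) : Antitone (QsLog s) := by
  intro β α hβα f hf
  obtain ⟨hol, C, hC⟩ := mem_qsLog_iff.mp hf
  refine mem_qsLog_iff.mpr ⟨hol, Real.toNNReal (Real.log 2 ^ (β - α)) * C, fun a ha => ?_⟩
  have h2 : 0 < Real.log 2 := Real.log_pos one_lt_two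
  have hL := log_two_div_pos ha
  have hsplit : Real.log (2 / (1 - ‖a‖)) ^ β ≤
      Real.log 2 ^ (β - α) * Real.log (2 / (1 - ‖a‖)) ^ α := by
    calc Real.log (2 / (1 - ‖a‖)) ^ β
        = Real.log (2 / (1 - ‖a‖)) ^ (β - α) * Real.log (2 / (1 - ‖a‖)) ^ α := by
          rw [← Real.rpow_add hL, sub_add_cancel]
      _ ≤ _ :=
          mul_le_mul_of_nonneg_right (Real.rpow_le_rpow_of_nonpos h2
            (log_two_le_log_two_div ha) (sub_nonpos.mpr hβα)) (Real.rpow_nonneg hL.le α)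
  calc ENNReal.ofReal (Real.log (2 / (1 - ‖a‖)) ^ β) * qsNorm s f a
      ≤ ENNReal.ofReal (Real.log 2 ^ (β - α) * Real.log (2 / (1 - ‖a‖)) ^ α) * qsNorm s f a := by
        gcongr
    _ ≤ _ := by
        rw [ENNReal.ofReal_mul (by positivity), mul_assoc, ENNReal.coe_mul]
        exact mul_le_mul_right (hC a ha) _

/-! ### Polar coordinates and mean values -/

/-- The normalized arc length measure on the circle, in the angular coordinate `θ ∈ (-π, π)`. -/
def angleMeasure : Measure ℝ := (ENNReal.ofReal (2 * π))⁻¹ • volume.restrict (Ioo (-π) π)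

instance : IsProbabilityMeasure angleMeasure where
  measure_univ := by
    rw [angleMeasure, Measure.smul_apply, Measure.restrict_apply_univ, Real.volume_Ioo, smul_eq_mul,
      show π - -π = 2 * π by ring, ENNReal.inv_mul_cancel _ ENNReal.ofReal_ne_top]
    exact (ENNReal.ofReal_pos.mpr two_pi_pos).ne'

lemma ae_mem_angle : ∀ᵐ θ ∂angleMeasure, θ ∈ Ioo (-π) π :=
  Measure.ae_smul_measure (ae_restrict_mem measurableSet_Ioo) _

lemma norm_circleMap_zero_of_pos {ρ : ℝ} (hρ : 0 < ρ) (θ : ℝ) : ‖circleMap 0 ρ θ‖ = ρ := by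
  rw [norm_circleMap_zero, abs_of_pos hρ]

lemma measurable_uncurry_circleMap : Measurable fun q : ℝ × ℝ => circleMap 0 q.1 q.2 := by
  unfold circleMap
  fun_prop

lemma setLIntegral_disc_eq_polar {F : ℂ → ℝ≥0∞} (hF : Measurable F) :
    ∫⁻ z in 𝔻, F z ∂dA = ∫⁻ ρ in Ioo (0 : ℝ) 1,
      ENNReal.ofReal (2 * ρ) * ∫⁻ θ, F (circleMap 0 ρ θ) ∂angleMeasure := by
  have hmeas : Measurable fun q : ℝ × ℝ =>
      ENNReal.ofReal q.1 • indicator 𝔻 F (circleMap 0 q.1 q.2) :=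
    (ENNReal.measurable_ofReal.comp measurable_fst).smul
      ((hF.indicator measurableSet_ball).comp measurable_uncurry_circleMap)
  have hsymm (q : ℝ × ℝ) : Complex.polarCoord.symm q = circleMap 0 q.1 q.2 := by
    simp [Complex.polarCoord_symm_apply, circleMap, Complex.exp_mul_I]
  have hπ : (ENNReal.ofReal π)⁻¹ = 2 * (ENNReal.ofReal (2 * π))⁻¹ := by
    rw [ENNReal.ofReal_mul two_pos.le, ENNReal.ofReal_ofNat,
      ENNReal.mul_inv (Or.inl two_ne_zero) (Or.inl ENNReal.ofNat_ne_top), ← mul_assoc,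
      ENNReal.mul_inv_cancel two_ne_zero ENNReal.ofNat_ne_top, one_mul]
  rw [restrict_dA, lintegral_smul_measure, ← lintegral_indicator measurableSet_ball,
    ← Complex.lintegral_comp_polarCoord_symm, polarCoord_target]
  simp only [hsymm]
  rw [Measure.volume_eq_prod, ← Measure.prod_restrict, lintegral_prod _ hmeas.aemeasurable,
    smul_eq_mul, ← lintegral_const_mul' _ _ (by simp [pi_pos]), ← Ioi_inter_Iio (a := (0 : ℝ)),
    inter_comm, ← setLIntegral_indicator measurableSet_Iio]
  refine setLIntegral_congr_fun measurableSet_Ioi fun ρ (hρ : 0 < ρ) => ?_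
  by_cases hρ1 : ρ < 1
  · have hmem (θ : ℝ) : circleMap 0 ρ θ ∈ 𝔻 :=
      mem_ball_zero_iff.mpr ((norm_circleMap_zero_of_pos hρ θ).trans_lt hρ1)
    simp only [indicator_of_mem (hmem _), indicator_of_mem (mem_Iio.mpr hρ1), angleMeasure, hπ,
      lintegral_smul_measure, smul_eq_mul, ENNReal.ofReal_mul two_pos.le, ENNReal.ofReal_ofNat,
      lintegral_const_mul' _ _ ENNReal.ofReal_ne_top]
    ring
  · have hmem (θ : ℝ) : circleMap 0 ρ θ ∉ 𝔻 := by
      rwa [mem_ball_zero_iff, norm_circleMap_zero_of_pos hρ]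
    simp only [indicator_of_notMem (hmem _), indicator_of_notMem (notMem_Iio.mpr (not_lt.mp hρ1)),
      smul_zero, lintegral_zero, mul_zero]

lemma circleAverage_eq_integral_angleMeasure (f : ℂ → ℂ) (ρ : ℝ) :
    circleAverage f 0 ρ = ∫ θ, f (circleMap 0 ρ θ) ∂angleMeasure := by
  rw [circleAverage_eq_integral_add (-π),
    intervalIntegral.integral_comp_add_right (fun θ => f (circleMap 0 ρ θ)), zero_add,
    show 2 * π + -π = π by ring, intervalIntegral.integral_of_le (by linarith [pi_pos]),
    integral_Ioc_eq_integral_Ioo, angleMeasure, integral_smul_measure, ENNReal.toReal_inv,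
    ENNReal.toReal_ofReal two_pi_pos.le]

lemma enorm_le_lintegral_circle_div {h : ℂ → ℂ} (hh : HolOn h) {a : ℂ} (ha : a ∈ 𝔻) {ρ : ℝ}
    (hρ : ρ ∈ Ioo (0 : ℝ) 1) :
    ‖h (a * ρ ^ 2)‖ₑ ≤
      ∫⁻ θ, ‖h (circleMap 0 ρ θ) / (1 - a * conj (circleMap 0 ρ θ))‖ₑ ∂angleMeasure := by
  have hd : DiffContOnCl ℂ h (ball 0 |ρ|) := by
    rw [abs_of_pos hρ.1]
    refine DifferentiableOn.diffContOnCl ?_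
    rw [closure_ball _ hρ.1.ne']
    exact hh.mono (closedBall_subset_ball hρ.2)
  have hw : a * ρ ^ 2 ∈ ball (0:ℂ) |ρ| := by
    have := mem_ball_zero_iff.mp ha
    rw [mem_ball_zero_iff, norm_mul, norm_pow, Complex.norm_real, Real.norm_eq_abs, abs_of_pos hρ.1]
    nlinarith [norm_nonneg a, hρ.1, hρ.2]
  have hkernel (θ : ℝ) : circleMap 0 ρ θ / (circleMap 0 ρ θ - a * ρ ^ 2) =
      (1 - a * conj (circleMap 0 ρ θ))⁻¹ := by
    set u := circleMap 0 ρ θ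
    have hu0 : u ≠ 0 := circleMap_ne_center hρ.1.ne'
    have hρu : (ρ : ℂ) ^ 2 = u * conj u := by
      rw [Complex.mul_conj', norm_circleMap_zero_of_pos hρ.1]
    rw [hρu, ← div_mul_cancel_left₀ hu0 (1 - a * conj u)]
    ring_nf
  rw [← hd.circleAverage_smul_div hw, circleAverage_eq_integral_angleMeasure]
  refine (enorm_integral_le_lintegral_enorm _).trans_eq ?_
  simp only [sub_zero, hkernel, smul_eq_mul, mul_comm, div_eq_mul_inv]

lemma rpow_lintegral_enorm_le {α : Type*} [MeasurableSpace α] {ν : Measure α}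
    [IsProbabilityMeasure ν] {q : ℝ} (hq : 1 ≤ q) {f : α → ℂ} (hf : AEStronglyMeasurable f ν) :
    (∫⁻ x, ‖f x‖ₑ ∂ν) ^ q ≤ ∫⁻ x, ‖f x‖ₑ ^ q ∂ν := by
  have hq0 : 0 < q := by linarith
  have h := eLpNorm'_le_eLpNorm'_of_exponent_le one_pos hq ν hf
  rw [lintegral_rpow_enorm_eq_rpow_eLpNorm' hq0]
  simpa only [eLpNorm'_eq_lintegral_enorm, ENNReal.rpow_one, div_one] using
    ENNReal.rpow_le_rpow h hq0.le

lemma enorm_rpow_le_lintegral_circle {h : ℂ → ℂ} (hh : HolOn h) (hm : Measurable h) {q : ℝ}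
    (hq : 1 ≤ q) {ρ : ℝ} (hρ : ρ ∈ Ioo (0 : ℝ) 1) :
    ‖h 0‖ₑ ^ q ≤ ∫⁻ θ, ‖h (circleMap 0 ρ θ)‖ₑ ^ q ∂angleMeasure := by
  have hmean : ‖h 0‖ₑ ≤ ∫⁻ θ, ‖h (circleMap 0 ρ θ)‖ₑ ∂angleMeasure := by
    simpa only [zero_mul, sub_zero, div_one] using
      enorm_le_lintegral_circle_div hh (mem_ball_self one_pos) hρ
  have hcm : Measurable fun θ => h (circleMap 0 ρ θ) :=
    hm.comp (continuous_circleMap 0 ρ).measurable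
  exact (ENNReal.rpow_le_rpow hmean (by linarith)).trans
    (rpow_lintegral_enorm_le hq hcm.aestronglyMeasurable)

lemma setLIntegral_Ioo_eq_of_hasDerivAt_of_nonneg {G g : ℝ → ℝ} {a b : ℝ} (hab : a ≤ b)
    (hG : ContinuousOn G (Icc a b)) (hG' : ∀ x ∈ Ioo a b, HasDerivAt G (g x) x)
    (hg : ∀ x ∈ Ioo a b, 0 ≤ g x) :
    ∫⁻ x in Ioo a b, ENNReal.ofReal (g x) = ENNReal.ofReal (G b - G a) := by
  have hint := intervalIntegral.integrableOn_deriv_of_nonneg hG hG' hg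
  rw [← intervalIntegral.integral_eq_sub_of_hasDerivAt_of_le hab hG hG'
      ((intervalIntegrable_iff_integrableOn_Ioc_of_le hab).mpr hint),
    intervalIntegral.integral_of_le hab, integral_Ioc_eq_integral_Ioo,
    ofReal_integral_eq_lintegral_ofReal (hint.mono_set Ioo_subset_Ioc_self)]
  filter_upwards [ae_restrict_mem measurableSet_Ioo] with x hx using hg x hx

lemma setLIntegral_two_mul_one_sub_sq_rpow {τ : ℝ} (hτ : -1 < τ) :
    ∫⁻ ρ in Ioo (0 : ℝ) 1, ENNReal.ofReal (2 * ρ * (1 - ρ ^ 2) ^ τ) = ENNReal.ofReal (τ + 1)⁻¹ := by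
  have hτ1 : τ + 1 ≠ 0 := by linarith
  have hpos {ρ : ℝ} (hρ : ρ ∈ Ioo (0 : ℝ) 1) : 0 < 1 - ρ ^ 2 := by nlinarith [hρ.1, hρ.2]
  rw [setLIntegral_Ioo_eq_of_hasDerivAt_of_nonneg
    (G := fun ρ => -((1 - ρ ^ 2) ^ (τ + 1) / (τ + 1))) zero_le_one]
  · simp [Real.zero_rpow hτ1]
  · refine (ContinuousOn.div_const (ContinuousOn.rpow_const (by fun_prop) fun x _ => ?_) _).neg
    exact Or.inr (by linarith)
  · intro ρ hρ
    have hinner : HasDerivAt (fun ρ : ℝ => 1 - ρ ^ 2) (-(2 * ρ)) ρ := by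
      simpa using (hasDerivAt_pow 2 ρ).const_sub 1
    refine ((hinner.rpow_const (Or.inl (hpos hρ).ne')).div_const (τ + 1)).neg.congr_deriv ?_
    rw [add_sub_cancel_right]
    field_simp
  · intro ρ hρ
    have := hpos hρ
    have := hρ.1
    positivity

lemma discWeight_circleMap {ρ : ℝ} (hρ : 0 < ρ) (τ θ : ℝ) :
    discWeight τ (circleMap 0 ρ θ) = ENNReal.ofReal ((1 - ρ ^ 2) ^ τ) := by
  rw [discWeight, norm_circleMap_zero_of_pos hρ]

lemma enorm_rpow_mul_le_setLIntegral_discWeight {h : ℂ → ℂ} (hh : HolOn h) (hm : Measurable h)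
    {q τ : ℝ} (hq : 1 ≤ q) (hτ : -1 < τ) :
    ‖h 0‖ₑ ^ q * ENNReal.ofReal (τ + 1)⁻¹ ≤ ∫⁻ z in 𝔻, ‖h z‖ₑ ^ q * discWeight τ z ∂dA := by
  have hint : Measurable fun z => ‖h z‖ₑ ^ q * discWeight τ z :=
    (hm.enorm.pow_const q).mul (measurable_discWeight τ)
  rw [← setLIntegral_two_mul_one_sub_sq_rpow hτ, setLIntegral_disc_eq_polar hint,
    ← lintegral_const_mul _ (by fun_prop)]
  refine setLIntegral_mono' measurableSet_Ioo fun ρ hρ => ?_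
  simp only [discWeight_circleMap hρ.1]
  rw [lintegral_mul_const' _ _ ENNReal.ofReal_ne_top,
    ENNReal.ofReal_mul (mul_nonneg two_pos.le hρ.1.le), mul_left_comm]
  gcongr
  exact enorm_rpow_le_lintegral_circle hh hm hq hρ

lemma setLIntegral_discWeight {τ : ℝ} (hτ : -1 < τ) :
    ∫⁻ z in 𝔻, discWeight τ z ∂dA = ENNReal.ofReal (τ + 1)⁻¹ := by
  rw [setLIntegral_disc_eq_polar (measurable_discWeight τ),
    ← setLIntegral_two_mul_one_sub_sq_rpow hτ]
  refine setLIntegral_congr_fun measurableSet_Ioo fun ρ hρ => ?_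
  simp only [discWeight_circleMap hρ.1, lintegral_const, measure_univ, mul_one]
  rw [← ENNReal.ofReal_mul (mul_nonneg two_pos.le hρ.1.le)]

/-! ### Conformal invariance -/

lemma enorm_deriv_phi_ne_zero {a z : ℂ} (ha : a ∈ 𝔻) (hz : z ∈ 𝔻) : ‖deriv (phi a) z‖ₑ ≠ 0 := by
  have h := one_sub_norm_sq_pos (phi_mem_disc ha hz)
  rw [← norm_deriv_phi_mul ha hz] at h
  exact enorm_ne_zero.mpr (norm_pos_iff.mp (pos_of_mul_pos_left h (one_sub_norm_sq_pos hz).le))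

lemma discWeight_phi {a z : ℂ} (ha : a ∈ 𝔻) (hz : z ∈ 𝔻) (τ : ℝ) :
    discWeight τ (phi a z) = ‖deriv (phi a) z‖ₑ ^ τ * discWeight τ z := by
  have hpos : 0 < ‖deriv (phi a) z‖ :=
    norm_pos_iff.mpr (enorm_ne_zero.mp (enorm_deriv_phi_ne_zero ha hz))
  rw [discWeight, discWeight, ← norm_deriv_phi_mul ha hz,
    Real.mul_rpow hpos.le (one_sub_norm_sq_pos hz).le, ENNReal.ofReal_mul (by positivity),
    ← ENNReal.ofReal_rpow_of_pos hpos, ofReal_norm]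

lemma discWeight_add {z : ℂ} (hz : z ∈ 𝔻) (σ τ : ℝ) :
    discWeight (σ + τ) z = discWeight σ z * discWeight τ z := by
  have h := one_sub_norm_sq_pos hz
  rw [discWeight, discWeight, discWeight, Real.rpow_add h, ENNReal.ofReal_mul (by positivity)]

lemma setLIntegral_deriv_comp_phi {f : ℂ → ℂ} (hf : HolOn f) {a : ℂ} (ha : a ∈ 𝔻) {q : ℝ}
    (hq : 0 ≤ q) (H : ℂ → ℝ≥0∞) :
    ∫⁻ z in 𝔻, ‖deriv f z‖ₑ ^ q * discWeight (q - 2) z * H (phi a z) ∂dA =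
      ∫⁻ z in 𝔻, ‖deriv (fun w => f (phi a w)) z‖ₑ ^ q * discWeight (q - 2) z * H z ∂dA := by
  rw [setLIntegral_comp_phi ha]
  refine setLIntegral_congr_fun measurableSet_ball fun z hz => ?_
  have hq2 : ‖deriv (phi a) z‖ₑ ^ q = ‖deriv (phi a) z‖ₑ ^ 2 * ‖deriv (phi a) z‖ₑ ^ (q - 2) := by
    rw [← ENNReal.rpow_two, ← ENNReal.rpow_add _ _ (enorm_deriv_phi_ne_zero ha hz) enorm_ne_top,
      add_sub_cancel]
  rw [phi_phi ha hz, discWeight_phi ha hz, deriv_comp_phi hf ha hz, enorm_mul,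
    ENNReal.mul_rpow_of_nonneg _ _ hq, hq2]
  ring

lemma discWeight_mul_enorm_deriv_rpow_le {f : ℂ → ℂ} (hf : HolOn f) {a : ℂ} (ha : a ∈ 𝔻)
    {q s : ℝ} (hq : 1 ≤ q) (hqs : 1 < q + s) :
    (discWeight 1 a * ‖deriv f a‖ₑ) ^ q ≤ ENNReal.ofReal (q + s - 1) *
      ∫⁻ z in 𝔻, ‖deriv f z‖ₑ ^ q * discWeight (q - 2) z * discWeight s (phi a z) ∂dA := by
  have h0 : (0 : ℂ) ∈ 𝔻 := mem_ball_self one_pos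
  have hcomp : ‖deriv (fun w => f (phi a w)) 0‖ₑ = discWeight 1 a * ‖deriv f a‖ₑ := by
    have h := norm_deriv_phi_mul ha h0
    rw [norm_zero, zero_pow two_ne_zero, sub_zero, mul_one, phi_zero_right] at h
    rw [deriv_comp_phi hf ha h0, phi_zero_right, enorm_mul, mul_comm, discWeight, Real.rpow_one,
      ← h, ofReal_norm]
  have hmean := enorm_rpow_mul_le_setLIntegral_discWeight (hf.comp_phi ha).deriv
    (measurable_deriv _) hq (by linarith : -1 < q - 2 + s)
  rw [hcomp, show q - 2 + s + 1 = q + s - 1 by ring,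
    ENNReal.ofReal_inv_of_pos (by linarith), ← div_eq_mul_inv,
    ENNReal.div_le_iff' (ENNReal.ofReal_pos.mpr (by linarith)).ne' ENNReal.ofReal_ne_top] at hmean
  rw [setLIntegral_deriv_comp_phi hf ha (by linarith)]
  refine hmean.trans_eq (congrArg _ (setLIntegral_congr_fun measurableSet_ball fun z hz => ?_))
  simp only [discWeight_add hz, mul_assoc]

/-! ### Growth estimates -/

lemma discWeight_rpow {z : ℂ} (hz : z ∈ 𝔻) (τ t : ℝ) :
    discWeight τ z ^ t = discWeight (τ * t) z := by
  have hpos := one_sub_norm_sq_pos hz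
  rw [discWeight, discWeight, ENNReal.ofReal_rpow_of_pos (Real.rpow_pos_of_pos hpos τ),
    Real.rpow_mul hpos.le]

lemma discWeight_mul_enorm_deriv_le_besovNorm {p : ℝ} (hp1 : 1 < p) (hp2 : p ≤ 2) {f : ℂ → ℂ}
    (hf : HolOn f) {a : ℂ} (ha : a ∈ 𝔻) : discWeight 1 a * ‖deriv f a‖ₑ ≤ besovNorm p f := by
  have hp : 0 < p := by linarith
  rw [← ENNReal.rpow_le_rpow_iff hp, besovNorm_rpow hp]
  refine (discWeight_mul_enorm_deriv_rpow_le hf ha hp1.le (s := 0) (by linarith)).trans ?_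
  simp only [discWeight_zero, mul_one]
  exact mul_le_of_le_one_left' (ENNReal.ofReal_le_one.mpr (by linarith))

lemma discWeight_mul_enorm_deriv_sq_le_qsNorm {s : ℝ} (hs : 0 ≤ s) {f : ℂ → ℂ} (hf : HolOn f)
    {a : ℂ} (ha : a ∈ 𝔻) :
    (discWeight 1 a * ‖deriv f a‖ₑ) ^ 2 ≤ ENNReal.ofReal (1 + s) * qsNorm s f a ^ 2 := by
  have h := discWeight_mul_enorm_deriv_rpow_le hf ha one_le_two (s := s) (by linarith)
  simpa only [sub_self, discWeight_zero, mul_one, ENNReal.rpow_two, ← qsNorm_sq,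
    show 2 + s - 1 = 1 + s by ring] using h

lemma qsNorm_zero_sq (f : ℂ → ℂ) (a : ℂ) :
    qsNorm 0 f a ^ 2 = ∫⁻ z in 𝔻, ‖deriv f z‖ₑ ^ 2 ∂dA := by
  simp only [qsNorm_sq, discWeight_zero, mul_one]

lemma qsNorm_le_qsNorm_zero {s : ℝ} (hs : 0 ≤ s) (f : ℂ → ℂ) {a : ℂ} (ha : a ∈ 𝔻) (b : ℂ) :
    qsNorm s f a ≤ qsNorm 0 f b := by
  rw [← ENNReal.pow_le_pow_left_iff two_ne_zero, qsNorm_zero_sq, qsNorm_sq]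
  exact setLIntegral_mono' measurableSet_ball fun z hz =>
    mul_le_of_le_one_right' (discWeight_le_one hs (phi_mem_disc ha hz))

lemma qsNorm_zero_le_besovNorm {p : ℝ} (hp1 : 1 < p) (hp2 : p ≤ 2) {f : ℂ → ℂ} (hf : HolOn f)
    (a : ℂ) : qsNorm 0 f a ≤ besovNorm p f := by
  have hp : 0 < p := by linarith
  have hpt (z : ℂ) (hz : z ∈ 𝔻) : ‖deriv f z‖ₑ ^ 2 ≤
      besovNorm p f ^ (2 - p) * (‖deriv f z‖ₑ ^ p * discWeight (p - 2) z) := by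
    calc ‖deriv f z‖ₑ ^ 2
        = (discWeight 1 z * ‖deriv f z‖ₑ) ^ (2 - p) *
            (‖deriv f z‖ₑ ^ p * discWeight (p - 2) z) := by
          have hweight : discWeight (2 - p) z * discWeight (p - 2) z = 1 := by
            rw [← discWeight_add hz, ← discWeight_zero z]
            ring_nf
          rw [ENNReal.mul_rpow_of_nonneg _ _ (by linarith), discWeight_rpow hz, one_mul,
            mul_mul_mul_comm, mul_comm (discWeight _ _), mul_mul_mul_comm, hweight, mul_one,
            ← ENNReal.rpow_add_of_nonneg _ _ hp.le (by linarith), add_sub_cancel, ENNReal.rpow_two]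
      _ ≤ _ := mul_le_mul_left (ENNReal.rpow_le_rpow
          (discWeight_mul_enorm_deriv_le_besovNorm hp1 hp2 hf hz) (by linarith)) _
  rw [← ENNReal.pow_le_pow_left_iff two_ne_zero, qsNorm_zero_sq]
  calc ∫⁻ z in 𝔻, ‖deriv f z‖ₑ ^ 2 ∂dA
      ≤ ∫⁻ z in 𝔻, besovNorm p f ^ (2 - p) * (‖deriv f z‖ₑ ^ p * discWeight (p - 2) z) ∂dA :=
        setLIntegral_mono' measurableSet_ball hpt
    _ = besovNorm p f ^ (2 - p) * besovNorm p f ^ p := by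
        have := measurable_discWeight (p - 2)
        rw [besovNorm_rpow hp, lintegral_const_mul _ (by fun_prop)]
    _ = besovNorm p f ^ 2 := by
        rw [← ENNReal.rpow_add_of_nonneg _ _ (by linarith) hp.le, sub_add_cancel, ENNReal.rpow_two]

lemma norm_sub_le_of_norm_deriv_le_rpow {F : ℂ → ℂ} (hF : HolOn F) {κ σ : ℝ} (hκ : 0 ≤ κ)
    (hσ : 0 < σ) (hb : ∀ v ∈ 𝔻, ‖deriv F v‖ ≤ κ * (1 - ‖v‖) ^ (-σ - 1)) {w : ℂ} (hw : w ∈ 𝔻) :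
    ‖F w - F 0‖ ≤ κ / σ * (1 - ‖w‖) ^ (-σ) := by
  have hw1 := mem_ball_zero_iff.mp hw
  have hnorm {t : ℝ} (ht : t ∈ Icc (0 : ℝ) 1) : ‖t * w‖ = t * ‖w‖ := by
    rw [norm_mul, Complex.norm_of_nonneg ht.1]
  have hlt {t : ℝ} (ht : t ∈ Icc (0 : ℝ) 1) : t * ‖w‖ < 1 := by
    nlinarith [norm_nonneg w, ht.1, ht.2]
  have hmem {t : ℝ} (ht : t ∈ Icc (0 : ℝ) 1) : (t * w : ℂ) ∈ 𝔻 := by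
    rw [mem_ball_zero_iff, hnorm ht]
    exact hlt ht
  have hderiv {t : ℝ} (ht : t ∈ Icc (0 : ℝ) 1) :
      HasDerivAt (fun t : ℝ => F (t * w) - F 0) (deriv F (t * w) * w) t :=
    (((hF.differentiableAt (hmem ht)).hasDerivAt.comp (t : ℂ)
      (hasDerivAt_mul_const w)).comp_ofReal).sub_const _
  have hbound {t : ℝ} (ht : t ∈ Icc (0 : ℝ) 1) :
      HasDerivAt (fun t : ℝ => κ / σ * (1 - t * ‖w‖) ^ (-σ))
        (κ * (1 - t * ‖w‖) ^ (-σ - 1) * ‖w‖) t := by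
    have hline : HasDerivAt (fun t : ℝ => 1 - t * ‖w‖) (-‖w‖) t :=
      (hasDerivAt_mul_const ‖w‖).const_sub 1
    refine ((hline.rpow_const (Or.inl (by linarith [hlt ht]))).const_mul (κ / σ)).congr_deriv ?_
    field_simp
  have key := image_norm_le_of_norm_deriv_right_le_deriv_boundary'
    (fun t ht => (hderiv ht).continuousAt.continuousWithinAt)
    (fun t ht => (hderiv (Ico_subset_Icc_self ht)).hasDerivWithinAt)
    (by
      simp only [ofReal_zero, zero_mul, sub_self, norm_zero, sub_zero, one_rpow, mul_one]
      positivity)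
    (fun t ht => (hbound ht).continuousAt.continuousWithinAt)
    (fun t ht => (hbound (Ico_subset_Icc_self ht)).hasDerivWithinAt)
    (fun t ht => by
      have ht' := Ico_subset_Icc_self ht
      rw [norm_mul, ← hnorm ht']
      gcongr
      exact hb _ (hmem ht'))
    (right_mem_Icc.mpr zero_le_one)
  simpa using key

lemma discWeight_phi_le {s : ℝ} (hs : 0 ≤ s) {v z : ℂ} (hv : v ∈ 𝔻) (hz : z ∈ 𝔻) :
    discWeight s (phi v z) ≤ ENNReal.ofReal ((2 / (1 - ‖v‖)) ^ s) * discWeight s z := by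
  have hv1 := mem_ball_zero_iff.mp hv
  have hz1 := mem_ball_zero_iff.mp hz
  have hpos : 0 < 1 - ‖v‖ := by linarith
  have hden : 1 - ‖v‖ ≤ ‖1 - conj v * z‖ := by
    have := norm_sub_norm_le 1 (conj v * z)
    rw [norm_mul, RCLike.norm_conj, norm_one] at this
    nlinarith [norm_nonneg v, norm_nonneg z]
  have hbase : 1 - ‖phi v z‖ ^ 2 ≤ 2 / (1 - ‖v‖) * (1 - ‖z‖ ^ 2) := by
    have hz2 := one_sub_norm_sq_pos hz
    rw [one_sub_norm_phi_sq hv hz, mul_div_right_comm]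
    refine mul_le_mul_of_nonneg_right ?_ hz2.le
    calc (1 - ‖v‖ ^ 2) / ‖1 - conj v * z‖ ^ 2 ≤ (1 - ‖v‖ ^ 2) / (1 - ‖v‖) ^ 2 := by
          have := (one_sub_norm_sq_pos hv).le
          gcongr
      _ = (1 + ‖v‖) / (1 - ‖v‖) := by field_simp; ring
      _ ≤ 2 / (1 - ‖v‖) := by gcongr; linarith
  rw [discWeight, discWeight, ← ENNReal.ofReal_mul (by positivity),
    ← Real.mul_rpow (by positivity) (one_sub_norm_sq_pos hz).le]
  exact ENNReal.ofReal_le_ofReal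
    (Real.rpow_le_rpow (one_sub_norm_sq_pos (phi_mem_disc hv hz)).le hbase hs)

lemma norm_deriv_le_qsNorm_mul_rpow {s : ℝ} (hs : 0 ≤ s) {F : ℂ → ℂ} (hF : HolOn F)
    (hN : qsNorm s F 0 ≠ ⊤) {v : ℂ} (hv : v ∈ 𝔻) :
    ‖deriv F v‖ ≤ √((1 + s) * 2 ^ s) * (qsNorm s F 0).toReal * (1 - ‖v‖) ^ (-(s / 2) - 1) := by
  set k := (qsNorm s F 0).toReal with hk
  have hpos : 0 < 1 - ‖v‖ := by linarith [mem_ball_zero_iff.mp hv]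
  have hshift : qsNorm s F v ^ 2 ≤
      ENNReal.ofReal ((2 / (1 - ‖v‖)) ^ s) * qsNorm s F 0 ^ 2 := by
    rw [qsNorm_sq, qsNorm_sq, ← lintegral_const_mul' _ _ ENNReal.ofReal_ne_top]
    refine setLIntegral_mono' measurableSet_ball fun z hz => ?_
    rw [discWeight_phi_zero, mul_left_comm]
    exact mul_le_mul_right (discWeight_phi_le hs hv hz) _
  have hreal : ((1 - ‖v‖ ^ 2) * ‖deriv F v‖) ^ 2 ≤
      (1 + s) * ((2 / (1 - ‖v‖)) ^ s * k ^ 2) := by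
    have h := (discWeight_mul_enorm_deriv_sq_le_qsNorm hs hF hv).trans
      (mul_le_mul_right hshift _)
    have hpos2 := one_sub_norm_sq_pos hv
    rwa [← ENNReal.ofReal_toReal hN, ← hk, ← ofReal_norm, discWeight, Real.rpow_one,
      ← ENNReal.ofReal_mul hpos2.le, ← ENNReal.ofReal_pow (by positivity),
      ← ENNReal.ofReal_pow (by positivity), ← ENNReal.ofReal_mul (by positivity),
      ← ENNReal.ofReal_mul (by positivity), ENNReal.ofReal_le_ofReal_iff (by positivity)] at h
  have hsq : ((1 - ‖v‖) * ‖deriv F v‖) ^ 2 ≤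
      (√((1 + s) * 2 ^ s) * k * (1 - ‖v‖) ^ (-(s / 2))) ^ 2 := by
    calc ((1 - ‖v‖) * ‖deriv F v‖) ^ 2 ≤ ((1 - ‖v‖ ^ 2) * ‖deriv F v‖) ^ 2 := by
          gcongr
          nlinarith [norm_nonneg v]
      _ ≤ (1 + s) * ((2 / (1 - ‖v‖)) ^ s * k ^ 2) := hreal
      _ = _ := by
          rw [mul_pow, mul_pow, Real.sq_sqrt (by positivity), ← Real.rpow_mul_natCast hpos.le,
            Real.div_rpow two_pos.le hpos.le, Nat.cast_ofNat, neg_mul,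
            div_mul_cancel₀ _ two_ne_zero, Real.rpow_neg hpos.le]
          ring
  have hmul := (sq_le_sq₀ (by positivity) (by positivity)).mp hsq
  rw [Real.rpow_sub_one hpos.ne', ← mul_div_assoc, le_div_iff₀' hpos]
  exact hmul

lemma enorm_sub_sq_mul_discWeight_le {s : ℝ} (hs : 0 < s) {F : ℂ → ℂ} (hF : HolOn F)
    {w : ℂ} (hw : w ∈ 𝔻) :
    ‖F w - F 0‖ₑ ^ 2 * discWeight s w ≤
      ENNReal.ofReal (4 * (1 + s) * 4 ^ s / s ^ 2) * qsNorm s F 0 ^ 2 := by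
  rcases eq_or_ne (qsNorm s F 0) ⊤ with hN | hN
  · rw [hN, ENNReal.top_pow two_ne_zero,
      ENNReal.mul_top (ENNReal.ofReal_pos.mpr (by positivity)).ne']
    exact le_top
  set k := (qsNorm s F 0).toReal with hk
  have hpos : 0 < 1 - ‖w‖ := by linarith [mem_ball_zero_iff.mp hw]
  have hray := norm_sub_le_of_norm_deriv_le_rpow hF (by positivity) (half_pos hs)
    (fun v hv => norm_deriv_le_qsNorm_mul_rpow hs.le hF hN hv) hw
  have hreal : ‖F w - F 0‖ ^ 2 * (1 - ‖w‖ ^ 2) ^ s ≤ 4 * (1 + s) * 4 ^ s / s ^ 2 * k ^ 2 := by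
    have hw2 : (1 - ‖w‖ ^ 2) ^ s ≤ 2 ^ s * (1 - ‖w‖) ^ s := by
      rw [← Real.mul_rpow two_pos.le hpos.le]
      exact Real.rpow_le_rpow (one_sub_norm_sq_pos hw).le (by nlinarith [norm_nonneg w]) hs.le
    have hcancel : ((1 - ‖w‖) ^ (-(s / 2))) ^ 2 * (1 - ‖w‖) ^ s = 1 := by
      rw [← Real.rpow_mul_natCast hpos.le, ← Real.rpow_add hpos, Nat.cast_ofNat, neg_mul,
        div_mul_cancel₀ _ two_ne_zero, neg_add_cancel, Real.rpow_zero]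
    calc ‖F w - F 0‖ ^ 2 * (1 - ‖w‖ ^ 2) ^ s
        ≤ (√((1 + s) * 2 ^ s) * k / (s / 2) * (1 - ‖w‖) ^ (-(s / 2))) ^ 2 *
            (2 ^ s * (1 - ‖w‖) ^ s) := by
          have := Real.rpow_nonneg (one_sub_norm_sq_pos hw).le s
          gcongr
      _ = √((1 + s) * 2 ^ s) ^ 2 * 2 ^ s * (2 / s) ^ 2 * k ^ 2 *
            (((1 - ‖w‖) ^ (-(s / 2))) ^ 2 * (1 - ‖w‖) ^ s) := by
          field_simp
      _ = _ := by
          rw [hcancel, Real.sq_sqrt (by positivity), show (4 : ℝ) = 2 * 2 by norm_num,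
            Real.mul_rpow two_pos.le two_pos.le]
          ring
  rw [← ENNReal.ofReal_toReal hN, ← hk, ← ofReal_norm, discWeight,
    ← ENNReal.ofReal_pow (norm_nonneg _), ← ENNReal.ofReal_pow (by positivity),
    ← ENNReal.ofReal_mul (by positivity), ← ENNReal.ofReal_mul (by positivity)]
  exact ENNReal.ofReal_le_ofReal hreal

lemma qsNorm_comp_phi {f : ℂ → ℂ} (hf : HolOn f) {a : ℂ} (ha : a ∈ 𝔻) (s : ℝ) :
    qsNorm s (fun z => f (phi a z)) 0 = qsNorm s f a := by
  have h := setLIntegral_deriv_comp_phi hf ha two_pos.le (discWeight s)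
  simp only [sub_self, discWeight_zero, mul_one, ENNReal.rpow_two] at h
  refine (ENNReal.pow_right_strictMono two_ne_zero).injective ?_
  simp only [qsNorm_sq, h, discWeight_phi_zero]

lemma enorm_sub_sq_mul_discWeight_phi_le {s : ℝ} (hs : 0 < s) {f : ℂ → ℂ} (hf : HolOn f)
    {a z : ℂ} (ha : a ∈ 𝔻) (hz : z ∈ 𝔻) :
    ‖f z - f a‖ₑ ^ 2 * discWeight s (phi a z) ≤
      ENNReal.ofReal (4 * (1 + s) * 4 ^ s / s ^ 2) * qsNorm s f z ^ 2 := by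
  have h := enorm_sub_sq_mul_discWeight_le hs (hf.comp_phi hz) (phi_mem_disc hz ha)
  rwa [phi_phi hz ha, phi_zero_right, qsNorm_comp_phi hf hz, ← discWeight_phi_comm, enorm_sub_rev]
    at h

instance : SFinite dA :=
  inferInstanceAs (SFinite ((ENNReal.ofReal π)⁻¹ • (volume : Measure ℂ)))

lemma setLIntegral_enorm_deriv_mul_sub_sq_le {s : ℝ} (hs : 0 < s) {f g : ℂ → ℂ} (hf : HolOn f)
    {M : ℝ≥0∞} (hM : ∀ v ∈ 𝔻, qsNorm s g v ≤ M) {a : ℂ} (ha : a ∈ 𝔻) :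
    ∫⁻ z in 𝔻, ‖deriv g z * (f z - f a)‖ₑ ^ 2 * discWeight s (phi a z) ∂dA ≤
      ENNReal.ofReal (4 * (1 + s) * 4 ^ s / s ^ 2) * (M ^ 2 * qsNorm 0 f 0 ^ 2) := by
  have := measurable_deriv f
  have := measurable_deriv g
  have hweight : Measurable fun q : ℂ × ℂ => discWeight s (phi q.1 q.2) :=
    (measurable_discWeight s).comp measurable_uncurry_phi
  calc ∫⁻ z in 𝔻, ‖deriv g z * (f z - f a)‖ₑ ^ 2 * discWeight s (phi a z) ∂dA
      ≤ ∫⁻ z in 𝔻, ENNReal.ofReal (4 * (1 + s) * 4 ^ s / s ^ 2) *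
          ∫⁻ v in 𝔻, ‖deriv g z‖ₑ ^ 2 * (‖deriv f v‖ₑ ^ 2 * discWeight s (phi z v)) ∂dA ∂dA := by
        refine setLIntegral_mono' measurableSet_ball fun z hz => ?_
        rw [lintegral_const_mul' _ _ (by finiteness), ← qsNorm_sq, enorm_mul, mul_pow, mul_assoc,
          mul_left_comm (ENNReal.ofReal _)]
        exact mul_le_mul_right (enorm_sub_sq_mul_discWeight_phi_le hs hf ha hz) _
    _ = ENNReal.ofReal (4 * (1 + s) * 4 ^ s / s ^ 2) * ∫⁻ v in 𝔻, ∫⁻ z in 𝔻,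
          ‖deriv g z‖ₑ ^ 2 * (‖deriv f v‖ₑ ^ 2 * discWeight s (phi z v)) ∂dA ∂dA := by
        rw [lintegral_const_mul' _ _ ENNReal.ofReal_ne_top, lintegral_lintegral_swap]
        exact (by fun_prop : Measurable _).aemeasurable
    _ ≤ ENNReal.ofReal (4 * (1 + s) * 4 ^ s / s ^ 2) *
          ∫⁻ v in 𝔻, M ^ 2 * ‖deriv f v‖ₑ ^ 2 ∂dA := by
        refine mul_le_mul_right (setLIntegral_mono' measurableSet_ball fun v hv => ?_) _
        refine le_trans (le_of_eq ?_) (mul_le_mul_left (pow_le_pow_left' (hM v hv) 2) _)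
        rw [qsNorm_sq, ← lintegral_mul_const' _ _ (by finiteness)]
        simp only [discWeight_phi_comm s _ v, mul_assoc, mul_comm (‖deriv f v‖ₑ ^ 2)]
    _ = _ := by rw [lintegral_const_mul _ (by fun_prop), qsNorm_zero_sq]

/-! ### The logarithmic kernel estimate -/

lemma abs_div_pi_le_norm_one_sub_mul_circleMap {r ρ θ : ℝ} (hr : r ∈ Icc (0 : ℝ) 1)
    (hρ : ρ ∈ Icc (0 : ℝ) 1) (hθ : |θ| ≤ π) : |θ| / π ≤ ‖1 - r * circleMap 0 ρ θ‖ := by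
  set x := r * ρ with hx
  have hx0 : 0 ≤ x := mul_nonneg hr.1 hρ.1
  have hsq : ‖1 - r * circleMap 0 ρ θ‖ ^ 2 = (1 - x) ^ 2 + 2 * x * (1 - Real.cos θ) := by
    have hre : (r * circleMap 0 ρ θ).re = x * Real.cos θ := by
      simp [circleMap, Complex.exp_re, hx, mul_assoc]
    rw [norm_sub_sq_real, Complex.inner, map_one, mul_one, hre, norm_one, norm_mul,
      norm_circleMap_zero, Complex.norm_of_nonneg hr.1, abs_of_nonneg hρ.1]
    ring
  have hy1 : (|θ| / π) ^ 2 ≤ 1 := pow_le_one₀ (by positivity) ((div_le_one pi_pos).mpr hθ)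
  have hcos : 2 * (|θ| / π) ^ 2 ≤ 1 - Real.cos θ := by
    have := Real.cos_le_one_sub_mul_cos_sq hθ
    rw [div_pow, sq_abs]
    linarith [this, (by ring : 2 / π ^ 2 * θ ^ 2 = 2 * (θ ^ 2 / π ^ 2))]
  refine (sq_le_sq₀ (by positivity) (norm_nonneg _)).mp ?_
  calc (|θ| / π) ^ 2 ≤ (1 + x) ^ 2 * (|θ| / π) ^ 2 :=
        le_mul_of_one_le_left (sq_nonneg _) (by nlinarith)
    _ = (1 - x) ^ 2 * (|θ| / π) ^ 2 + 2 * x * (2 * (|θ| / π) ^ 2) := by ring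
    _ ≤ (1 - x) ^ 2 * 1 + 2 * x * (1 - Real.cos θ) := by gcongr
    _ = _ := by rw [hsq, mul_one]

lemma add_abs_le_norm_one_sub_mul_circleMap {r ρ θ : ℝ} (hr : r ∈ Icc (0 : ℝ) 1)
    (hρ : ρ ∈ Icc (0 : ℝ) 1) (hθ : |θ| ≤ π) :
    1 - ρ ^ 2 + (1 - r + |θ|) ≤ 7 * ‖1 - r * circleMap 0 ρ θ‖ := by
  have hangle := abs_div_pi_le_norm_one_sub_mul_circleMap hr hρ hθ
  have hradial : 1 - r * ρ ≤ ‖1 - r * circleMap 0 ρ θ‖ := by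
    have := norm_sub_norm_le 1 (r * circleMap 0 ρ θ)
    rwa [norm_one, norm_mul, Complex.norm_of_nonneg hr.1, norm_circleMap_zero,
      abs_of_nonneg hρ.1] at this
  rw [div_le_iff₀ pi_pos] at hangle
  nlinarith [Real.pi_le_four, hr.1, hr.2, hρ.1, hρ.2, norm_nonneg (1 - r * circleMap 0 ρ θ)]

lemma setLIntegral_radial_kernel_le {q m : ℝ} (hq : 1 < q) (hm : 0 < m) :
    ∫⁻ ρ in Ioo (0 : ℝ) 1, ENNReal.ofReal (2 * ρ * (1 - ρ ^ 2) ^ (q - 2) / (1 - ρ ^ 2 + m) ^ q) ≤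
      ENNReal.ofReal ((q - 1)⁻¹ * m⁻¹) := by
  have hq1 : 0 < q - 1 := by linarith
  have hpos {ρ : ℝ} (hρ : ρ ∈ Ioo (0 : ℝ) 1) : 0 < 1 - ρ ^ 2 := by nlinarith [hρ.1, hρ.2]
  rw [setLIntegral_Ioo_eq_of_hasDerivAt_of_nonneg
    (G := fun ρ => -((q - 1)⁻¹ * m⁻¹ * ((1 - ρ ^ 2) / (1 - ρ ^ 2 + m)) ^ (q - 1))) zero_le_one]
  · refine ENNReal.ofReal_le_ofReal ?_
    simp only [one_pow, sub_self, zero_div, Real.zero_rpow hq1.ne', zero_pow two_ne_zero, sub_zero,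
      mul_zero, neg_zero, sub_neg_eq_add, zero_add]
    refine mul_le_of_le_one_right (by positivity) (Real.rpow_le_one (by positivity) ?_ hq1.le)
    rw [div_le_one (by positivity)]
    linarith
  · refine (continuousOn_const.mul (ContinuousOn.rpow_const (ContinuousOn.div (by fun_prop)
      (by fun_prop) fun x hx => ?_) fun x _ => Or.inr hq1.le)).neg
    nlinarith [hx.1, hx.2]
  · intro ρ hρ
    have h1 := hpos hρ
    have hinner : HasDerivAt (fun ρ : ℝ => 1 - ρ ^ 2) (-(2 * ρ)) ρ := by
      simpa using (hasDerivAt_pow 2 ρ).const_sub 1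
    have h2 : 0 < 1 - ρ ^ 2 + m := by positivity
    have hbase : HasDerivAt (fun ρ : ℝ => (1 - ρ ^ 2) / (1 - ρ ^ 2 + m))
        (-(2 * ρ) * m / (1 - ρ ^ 2 + m) ^ 2) ρ :=
      (hinner.fun_div (hinner.add_const m) h2.ne').congr_deriv (by ring)
    refine ((hbase.rpow_const (p := q - 1) (Or.inl (by positivity))).const_mul
      ((q - 1)⁻¹ * m⁻¹)).neg.congr_deriv ?_
    have hsplit : (1 - ρ ^ 2 + m) ^ q = (1 - ρ ^ 2 + m) ^ (q - 2) * (1 - ρ ^ 2 + m) ^ 2 := by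
      rw [← Real.rpow_two (1 - ρ ^ 2 + m), ← Real.rpow_add h2, sub_add_cancel]
    rw [Real.div_rpow h1.le h2.le, hsplit, show q - 1 - 1 = q - 2 by ring]
    field_simp
  · intro ρ hρ
    have := hpos hρ
    have := hρ.1
    positivity

lemma setLIntegral_Ioo_comp_abs_le {b : ℝ} (hb : 0 < b) (F : ℝ → ℝ≥0∞) :
    ∫⁻ θ in Ioo (-b) b, F |θ| ≤ 2 * ∫⁻ θ in Ioo 0 b, F θ := by
  have hright : ∫⁻ θ in Ioo 0 b, F |θ| = ∫⁻ θ in Ioo 0 b, F θ :=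
    setLIntegral_congr_fun measurableSet_Ioo fun θ hθ => by simp only [abs_of_pos hθ.1]
  have hleft : ∫⁻ θ in Ioc (-b) 0, F |θ| = ∫⁻ θ in Ioo 0 b, F θ := by
    have hneg := (Measure.measurePreserving_neg (volume : Measure ℝ)).setLIntegral_comp_preimage_emb
      (MeasurableEquiv.neg ℝ).measurableEmbedding (fun θ => F |θ|) (Ioo 0 b)
    simp only [abs_neg] at hneg
    rw [← hright, ← hneg, Set.neg_preimage, Set.neg_Ioo, neg_zero, setLIntegral_congr Ioo_ae_eq_Ioc]
  rw [← Ioc_union_Ioo_eq_Ioo (neg_nonpos.mpr hb.le) hb, two_mul]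
  exact (lintegral_union_le _ _ _).trans_eq (by rw [hleft, hright])

lemma lintegral_angular_kernel_le {δ : ℝ} (hδ0 : 0 < δ) (hδ1 : δ ≤ 1) :
    ∫⁻ θ, ENNReal.ofReal (δ + |θ|)⁻¹ ∂angleMeasure ≤ ENNReal.ofReal (Real.log (2 / δ)) := by
  have hint : ∫⁻ θ in Ioo 0 π, ENNReal.ofReal (δ + θ)⁻¹ =
      ENNReal.ofReal (Real.log ((δ + π) / δ)) := by
    rw [setLIntegral_Ioo_eq_of_hasDerivAt_of_nonneg (G := fun θ => Real.log (δ + θ)) pi_pos.le,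
      add_zero, Real.log_div (by positivity) hδ0.ne']
    · exact ContinuousOn.log (by fun_prop) fun θ hθ => by linarith [hθ.1]
    · intro θ hθ
      exact (((hasDerivAt_id' θ).const_add δ).log (by linarith [hθ.1])).congr_deriv (one_div _)
    · intro θ hθ
      have := hθ.1
      positivity
  have hlog : Real.log ((δ + π) / δ) ≤ 3 * Real.log (2 / δ) := by
    rw [← Nat.cast_ofNat, ← Real.log_pow]
    refine Real.log_le_log (by positivity) ?_
    rw [div_pow, div_le_div_iff₀ hδ0 (by positivity)]
    have : (δ + π) * δ ^ 2 ≤ 5 * 1 :=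
      mul_le_mul (by linarith [Real.pi_le_four]) (by nlinarith) (by positivity) (by norm_num)
    nlinarith
  rw [angleMeasure, lintegral_smul_measure, smul_eq_mul]
  calc (ENNReal.ofReal (2 * π))⁻¹ * ∫⁻ θ in Ioo (-π) π, ENNReal.ofReal (δ + |θ|)⁻¹
      ≤ (ENNReal.ofReal (2 * π))⁻¹ * (2 * ENNReal.ofReal (Real.log ((δ + π) / δ))) := by
        rw [← hint]
        exact mul_le_mul_right (setLIntegral_Ioo_comp_abs_le pi_pos _) _
    _ = ENNReal.ofReal (Real.log ((δ + π) / δ) / π) := by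
        rw [← ENNReal.ofReal_inv_of_pos two_pi_pos, ← ENNReal.ofReal_ofNat 2,
          ← ENNReal.ofReal_mul two_pos.le, ← ENNReal.ofReal_mul (by positivity)]
        congr 1
        field_simp
    _ ≤ ENNReal.ofReal (Real.log (2 / δ)) := by
        refine ENNReal.ofReal_le_ofReal ((div_le_iff₀' pi_pos).mpr (hlog.trans ?_))
        have : 0 ≤ Real.log (2 / δ) := Real.log_nonneg ((one_le_div hδ0).mpr (by linarith))
        gcongr
        exact Real.pi_gt_three.le

lemma kernel_ofReal_circleMap_le {q r ρ θ : ℝ} (hq : 0 ≤ q) (hr : r ∈ Ico (0 : ℝ) 1)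
    (hρ : ρ ∈ Ioo (0 : ℝ) 1) (hθ : |θ| ≤ π) :
    ENNReal.ofReal (2 * ρ) * (‖1 - r * circleMap 0 ρ θ‖ₑ⁻¹ ^ q *
      discWeight (q - 2) (circleMap 0 ρ θ)) ≤ ENNReal.ofReal (7 ^ q) *
    ENNReal.ofReal (2 * ρ * (1 - ρ ^ 2) ^ (q - 2) / (1 - ρ ^ 2 + (1 - r + |θ|)) ^ q) := by
  have hr1 : 0 < 1 - r := by linarith [hr.2]
  have hρ1 : 0 < 1 - ρ ^ 2 := by nlinarith [hρ.1, hρ.2]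
  have hρ0 := hρ.1
  have hlower := add_abs_le_norm_one_sub_mul_circleMap (Ico_subset_Icc_self hr)
    (Ioo_subset_Icc_self hρ) hθ
  have hnorm : 0 < ‖1 - r * circleMap 0 ρ θ‖ := by
    have : 0 < 1 - ρ ^ 2 + (1 - r + |θ|) := by positivity
    linarith
  rw [discWeight_circleMap hρ0, ← ofReal_norm, ← ENNReal.ofReal_inv_of_pos hnorm,
    ENNReal.ofReal_rpow_of_pos (by positivity), ← ENNReal.ofReal_mul (by positivity),
    ← ENNReal.ofReal_mul (by positivity), ← ENNReal.ofReal_mul (by positivity)]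
  refine ENNReal.ofReal_le_ofReal ?_
  calc 2 * ρ * (‖1 - r * circleMap 0 ρ θ‖⁻¹ ^ q * (1 - ρ ^ 2) ^ (q - 2))
      = 7 ^ q * (2 * ρ * (1 - ρ ^ 2) ^ (q - 2) / (7 * ‖1 - r * circleMap 0 ρ θ‖) ^ q) := by
        rw [Real.inv_rpow hnorm.le, Real.mul_rpow (by norm_num) hnorm.le]
        field_simp
    _ ≤ _ := by gcongr

lemma setLIntegral_kernel_ofReal_le {q : ℝ} (hq : 1 < q) {r : ℝ} (hr : r ∈ Ico (0 : ℝ) 1) :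
    ∫⁻ z in 𝔻, ‖1 - r * z‖ₑ⁻¹ ^ q * discWeight (q - 2) z ∂dA ≤
      ENNReal.ofReal (7 ^ q * (q - 1)⁻¹ * Real.log (2 / (1 - r))) := by
  have hr1 : 0 < 1 - r := by linarith [hr.2]
  have : 0 < q - 1 := by linarith
  have := measurable_discWeight (q - 2)
  calc ∫⁻ z in 𝔻, ‖1 - r * z‖ₑ⁻¹ ^ q * discWeight (q - 2) z ∂dA
      ≤ ∫⁻ ρ in Ioo (0 : ℝ) 1, ∫⁻ θ, ENNReal.ofReal (7 ^ q) * ENNReal.ofReal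
          (2 * ρ * (1 - ρ ^ 2) ^ (q - 2) / (1 - ρ ^ 2 + (1 - r + |θ|)) ^ q) ∂angleMeasure := by
        rw [setLIntegral_disc_eq_polar (by fun_prop)]
        refine setLIntegral_mono' measurableSet_Ioo fun ρ hρ => ?_
        rw [← lintegral_const_mul' _ _ ENNReal.ofReal_ne_top]
        exact lintegral_mono_ae (ae_mem_angle.mono fun θ hθ =>
          kernel_ofReal_circleMap_le (by linarith) hr hρ (abs_le.mpr ⟨hθ.1.le, hθ.2.le⟩))
    _ = ENNReal.ofReal (7 ^ q) * ∫⁻ θ, (∫⁻ ρ in Ioo (0 : ℝ) 1, ENNReal.ofReal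
          (2 * ρ * (1 - ρ ^ 2) ^ (q - 2) / (1 - ρ ^ 2 + (1 - r + |θ|)) ^ q)) ∂angleMeasure := by
        simp only [lintegral_const_mul' _ _ ENNReal.ofReal_ne_top]
        rw [lintegral_lintegral_swap (by fun_prop)]
    _ ≤ ENNReal.ofReal (7 ^ q) *
          ∫⁻ θ, ENNReal.ofReal (q - 1)⁻¹ * ENNReal.ofReal (1 - r + |θ|)⁻¹ ∂angleMeasure := by
        refine mul_le_mul_right (lintegral_mono fun θ => ?_) _
        rw [← ENNReal.ofReal_mul (by positivity)]
        exact setLIntegral_radial_kernel_le hq (by positivity)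
    _ ≤ ENNReal.ofReal (7 ^ q) *
          (ENNReal.ofReal (q - 1)⁻¹ * ENNReal.ofReal (Real.log (2 / (1 - r)))) := by
        rw [lintegral_const_mul' _ _ ENNReal.ofReal_ne_top]
        gcongr
        exact lintegral_angular_kernel_le hr1 (by linarith [hr.1])
    _ = _ := by
        rw [← ENNReal.ofReal_mul (by positivity), ← ENNReal.ofReal_mul (by positivity), mul_assoc]

lemma setLIntegral_disc_comp_mul_left {ω : ℂ} (hω : ‖ω‖ = 1) (F : ℂ → ℝ≥0∞) :
    ∫⁻ z in 𝔻, F (ω * z) ∂dA = ∫⁻ z in 𝔻, F z ∂dA := by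
  have hω0 : ω ≠ 0 := norm_ne_zero_iff.mp (hω ▸ one_ne_zero)
  have himage : (ω * ·) '' 𝔻 = 𝔻 := by
    have h := smul_ball hω0 (0 : ℂ) 1
    rwa [hω, smul_zero, mul_one] at h
  have hderiv (z : ℂ) : HasDerivAt (ω * ·) ω z := by
    simpa only [mul_one] using (hasDerivAt_id' z).const_mul ω
  have h := setLIntegral_image_dA (S := 𝔻) measurableSet_ball
    (fun z _ => (hderiv z).differentiableAt) (mul_right_injective₀ hω0).injOn F
  simp only [himage, (hderiv _).deriv, ← ofReal_norm, hω, ENNReal.ofReal_one, one_pow, one_mul] at h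
  exact h.symm

lemma setLIntegral_kernel_le {q : ℝ} (hq : 1 < q) {a : ℂ} (ha : a ∈ 𝔻) :
    ∫⁻ z in 𝔻, ‖1 - conj a * z‖ₑ⁻¹ ^ q * discWeight (q - 2) z ∂dA ≤
      ENNReal.ofReal (7 ^ q * (q - 1)⁻¹ * Real.log (2 / (1 - ‖a‖))) := by
  obtain ⟨ω, hω, haω⟩ : ∃ ω : ℂ, ‖ω‖ = 1 ∧ conj a * ω = ‖a‖ := by
    refine ⟨Complex.exp (a.arg * I), Complex.norm_exp_ofReal_mul_I _, ?_⟩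
    nth_rw 1 [← Complex.norm_mul_exp_arg_mul_I a]
    rw [map_mul, Complex.conj_ofReal, ← Complex.exp_conj, map_mul, Complex.conj_ofReal,
      Complex.conj_I, mul_assoc, ← Complex.exp_add, mul_neg, neg_add_cancel, Complex.exp_zero,
      mul_one]
  rw [← setLIntegral_disc_comp_mul_left hω]
  simp only [← mul_assoc, haω, discWeight, norm_mul, hω, one_mul]
  exact setLIntegral_kernel_ofReal_le hq ⟨norm_nonneg a, mem_ball_zero_iff.mp ha⟩

lemma enorm_sub_le_setLIntegral_mul_kernel {f : ℂ → ℂ} (hf : HolOn f) {a : ℂ} (ha : a ∈ 𝔻) :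
    ‖f a - f 0‖ₑ ≤ ∫⁻ z in 𝔻, ‖deriv f z‖ₑ * ‖1 - conj a * z‖ₑ⁻¹ ∂dA := by
  have ha1 : ‖a‖ < 1 := mem_ball_zero_iff.mp ha
  have hmem {ρ : ℝ} (hρ : ρ ∈ Icc (0 : ℝ) 1) : a * ρ ^ 2 ∈ 𝔻 := by
    rw [mem_ball_zero_iff, norm_mul, norm_pow, Complex.norm_of_nonneg hρ.1]
    exact mul_lt_one_of_nonneg_of_lt_one_left (norm_nonneg a) ha1 (pow_le_one₀ hρ.1 hρ.2)
  have hsmooth : ContDiffOn ℝ 1 (fun ρ : ℝ => f (a * ρ ^ 2)) (Icc 0 1) := by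
    have hf' : ContDiffOn ℝ 1 f 𝔻 :=
      (DifferentiableOn.contDiffOn (n := 1) hf isOpen_ball).restrict_scalars ℝ
    have hray : ContDiff ℝ 1 fun ρ : ℝ => a * (ρ : ℂ) ^ 2 :=
      contDiff_const.mul (Complex.ofRealCLM.contDiff.pow 2)
    exact hf'.comp hray.contDiffOn fun ρ hρ => hmem hρ
  have hderiv {ρ : ℝ} (hρ : ρ ∈ Icc (0 : ℝ) 1) :
      deriv (fun ρ : ℝ => f (a * ρ ^ 2)) ρ = deriv f (a * ρ ^ 2) * (a * (2 * ρ)) := by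
    have hray : HasDerivAt (fun t : ℂ => a * t ^ 2) (a * (2 * ρ)) ρ := by
      simpa using (hasDerivAt_pow 2 (ρ : ℂ)).const_mul a
    exact ((hf.differentiableAt (hmem hρ)).hasDerivAt.comp (ρ : ℂ) hray).comp_ofReal.deriv
  have hdiff := enorm_sub_le_lintegral_deriv_of_contDiffOn_Icc hsmooth zero_le_one
  simp only [ofReal_one, one_pow, mul_one, ofReal_zero, zero_pow two_ne_zero, mul_zero] at hdiff
  rw [setLIntegral_disc_eq_polar (by have := measurable_deriv f; fun_prop)]
  refine hdiff.trans ?_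
  rw [← restrict_Ioo_eq_restrict_Icc]
  refine setLIntegral_mono' measurableSet_Ioo fun ρ hρ => ?_
  rw [hderiv (Ioo_subset_Icc_self hρ), enorm_mul, mul_comm]
  refine mul_le_mul' ?_ ((enorm_le_lintegral_circle_div hf.deriv ha hρ).trans_eq ?_)
  · rw [← ofReal_norm, norm_mul, norm_mul, Complex.norm_ofNat, Complex.norm_of_nonneg hρ.1.le]
    exact ENNReal.ofReal_le_ofReal (mul_le_of_le_one_left (by linarith [hρ.1]) ha1.le)
  · refine lintegral_congr fun θ => ?_
    have hu : circleMap 0 ρ θ ∈ 𝔻 := by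
      rw [mem_ball_zero_iff, norm_circleMap_zero, abs_of_pos hρ.1]
      exact hρ.2
    have hconj : 1 - a * conj (circleMap 0 ρ θ) = conj (1 - conj a * circleMap 0 ρ θ) := by
      rw [map_sub, map_mul, map_one, conj_conj]
    rw [hconj, div_eq_mul_inv, enorm_mul, ← map_inv₀, RCLike.enorm_conj,
      enorm_inv (one_sub_conj_mul_ne_zero ha hu)]

lemma setLIntegral_enorm_deriv_mul_le_besovNorm_mul {p q : ℝ} (hpq : p.HolderConjugate q)
    (f : ℂ → ℂ) {k : ℂ → ℝ≥0∞} (hk : Measurable k) :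
    ∫⁻ z in 𝔻, ‖deriv f z‖ₑ * k z ∂dA ≤
      besovNorm p f * (∫⁻ z in 𝔻, k z ^ q * discWeight (q - 2) z ∂dA) ^ q⁻¹ := by
  have hp := hpq.pos
  set τ := (p - 2) / p with hτ
  have hτp : τ * p = p - 2 := div_mul_cancel₀ _ hp.ne'
  have hτq : -τ * q = q - 2 := by
    have hq := hpq.symm.pos
    have := hpq.inv_add_inv_eq_one
    rw [hτ]
    field_simp at this ⊢
    linarith
  have hsplit {F : ℂ → ℝ≥0∞} {σ t : ℝ} (ht : 0 ≤ t) :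
      ∫⁻ z in 𝔻, (F z * discWeight σ z) ^ t ∂dA =
        ∫⁻ z in 𝔻, F z ^ t * discWeight (σ * t) z ∂dA :=
    setLIntegral_congr_fun measurableSet_ball fun z hz => by
      rw [ENNReal.mul_rpow_of_nonneg _ _ ht, discWeight_rpow hz]
  have := measurable_deriv f
  have hweight := measurable_discWeight
  calc ∫⁻ z in 𝔻, ‖deriv f z‖ₑ * k z ∂dA
      = ∫⁻ z in 𝔻, (‖deriv f z‖ₑ * discWeight τ z) * (k z * discWeight (-τ) z) ∂dA := by
        refine setLIntegral_congr_fun measurableSet_ball fun z hz => ?_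
        rw [mul_mul_mul_comm, ← discWeight_add hz, add_neg_cancel, discWeight_zero, mul_one]
    _ ≤ (∫⁻ z in 𝔻, (‖deriv f z‖ₑ * discWeight τ z) ^ p ∂dA) ^ (1 / p) *
          (∫⁻ z in 𝔻, (k z * discWeight (-τ) z) ^ q ∂dA) ^ (1 / q) :=
        ENNReal.lintegral_mul_le_Lp_mul_Lq _ hpq (by fun_prop) (by fun_prop)
    _ = _ := by
        rw [hsplit hp.le, hsplit hpq.symm.nonneg, hτp, hτq, ← besovNorm_rpow hp, ← ENNReal.rpow_mul,
          mul_one_div_cancel hp.ne', ENNReal.rpow_one, one_div]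

lemma enorm_sub_le_log_rpow_mul_besovNorm {p q : ℝ} (hpq : p.HolderConjugate q) {f : ℂ → ℂ}
    (hf : HolOn f) {a : ℂ} (ha : a ∈ 𝔻) :
    ‖f a - f 0‖ₑ ≤ ENNReal.ofReal (7 ^ q * (q - 1)⁻¹) ^ q⁻¹ *
      ENNReal.ofReal (Real.log (2 / (1 - ‖a‖)) ^ q⁻¹) * besovNorm p f := by
  have hq1 : 0 < q - 1 := hpq.symm.sub_one_pos
  calc ‖f a - f 0‖ₑ
      ≤ ∫⁻ z in 𝔻, ‖deriv f z‖ₑ * ‖1 - conj a * z‖ₑ⁻¹ ∂dA :=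
        enorm_sub_le_setLIntegral_mul_kernel hf ha
    _ ≤ besovNorm p f *
          (∫⁻ z in 𝔻, ‖1 - conj a * z‖ₑ⁻¹ ^ q * discWeight (q - 2) z ∂dA) ^ q⁻¹ :=
        setLIntegral_enorm_deriv_mul_le_besovNorm_mul hpq f (by fun_prop)
    _ ≤ besovNorm p f *
          ENNReal.ofReal (7 ^ q * (q - 1)⁻¹ * Real.log (2 / (1 - ‖a‖))) ^ q⁻¹ := by
        refine mul_le_mul_right (ENNReal.rpow_le_rpow (setLIntegral_kernel_le hpq.symm.lt ha) ?_) _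
        exact hpq.symm.inv_nonneg
    _ = _ := by
        rw [mul_comm, ENNReal.ofReal_mul (by positivity),
          ENNReal.mul_rpow_of_nonneg _ _ hpq.symm.inv_nonneg,
          ENNReal.ofReal_rpow_of_pos (log_two_div_pos ha)]

/-! ### Uniform boundedness -/

lemma eLpNorm_le_tsum_eLpNorm {α E : Type*} [MeasurableSpace α] {μ : Measure α}
    [NormedAddCommGroup E] {q : ℝ≥0∞} (hq : 1 ≤ q) {F : ℕ → α → E} {G : α → E}
    (hF : ∀ n, AEStronglyMeasurable (F n) μ) (hG : ∀ᵐ x ∂μ, HasSum (fun n => F n x) (G x)) :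
    eLpNorm G q μ ≤ ∑' n, eLpNorm (F n) q μ := by
  refine Lp.eLpNorm_le_of_ae_tendsto (u := atTop) (f := fun N => ∑ n ∈ Finset.range N, F n)
    (.of_forall fun N => ?_) (fun N => Finset.aestronglyMeasurable_sum _ fun n _ => hF n)
    (hG.mono fun x hx => ?_)
  · exact (eLpNorm_sum_le (fun n _ => hF n) hq).trans (ENNReal.sum_le_tsum _)
  · simpa only [Finset.sum_apply] using hx.tendsto_sum_nat

section Banach

variable {𝕜 α E F : Type*} [NontriviallyNormedField 𝕜] [NormedAddCommGroup E] [NormedSpace 𝕜 E]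
  [NormedAddCommGroup F] [NormedSpace 𝕜 F] [MeasurableSpace α] {Λ : α → E →L[𝕜] F} {q : ℝ≥0∞}

/-- The seminorm `c ↦ ‖z ↦ Λ z c‖` of `L^q(μ)` on the domain of a family of operators `Λ z`. -/
def eLpSeminorm (hq : 1 ≤ q) (μ : Measure α) (hΛ : ∀ c, MemLp (fun z => Λ z c) q μ) :
    Seminorm 𝕜 E :=
  Seminorm.of (fun c => (eLpNorm (fun z => Λ z c) q μ).toReal)
    (fun c d => by
      simp only [map_add]
      rw [← ENNReal.toReal_add (hΛ c).2.ne (hΛ d).2.ne]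
      exact ENNReal.toReal_mono (ENNReal.add_ne_top.mpr ⟨(hΛ c).2.ne, (hΛ d).2.ne⟩)
        (eLpNorm_add_le (hΛ c).1 (hΛ d).1 hq))
    (fun t c => by
      simp only [map_smul]
      rw [← toReal_enorm, ← ENNReal.toReal_mul]
      exact congrArg _ (eLpNorm_const_smul t (fun z => Λ z c) q μ))

lemma continuous_eLpSeminorm [CompleteSpace E] (hq : 1 ≤ q) {μ : Measure α}
    (hΛ : ∀ c, MemLp (fun z => Λ z c) q μ) : Continuous (eLpSeminorm hq μ hΛ) := by
  refine Seminorm.continuous_of_lowerSemicontinuous _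
    (lowerSemicontinuous_iff_isClosed_preimage.mpr fun y => IsSeqClosed.isClosed ?_)
  intro c c₀ hc hlim
  have hy : 0 ≤ y := (apply_nonneg (eLpSeminorm hq μ hΛ) (c 0)).trans (hc 0)
  refine ENNReal.toReal_le_of_le_ofReal hy (Lp.eLpNorm_le_of_ae_tendsto (u := atTop)
    (f := fun k z => Λ z (c k)) (.of_forall fun k => ?_) (fun k => (hΛ _).1)
    (ae_of_all _ fun z => ((Λ z).continuous.tendsto c₀).comp hlim))
  exact (ENNReal.le_ofReal_iff_toReal_le (hΛ _).2.ne hy).mpr (hc k)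

theorem exists_forall_eLpNorm_le_mul_enorm [CompleteSpace E] (hq : 1 ≤ q) {ι : Type*}
    {μ : ι → Measure α} (hmeas : ∀ i c, AEStronglyMeasurable (fun z => Λ z c) (μ i))
    (hbdd : ∀ c, ∃ C : ℝ≥0, ∀ i, eLpNorm (fun z => Λ z c) q (μ i) ≤ C) :
    ∃ C : ℝ≥0, ∀ i c, eLpNorm (fun z => Λ z c) q (μ i) ≤ C * ‖c‖ₑ := by
  have hΛ (i : ι) (c : E) : MemLp (fun z => Λ z c) q (μ i) := by
    obtain ⟨C, hC⟩ := hbdd c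
    exact ⟨hmeas i c, (hC i).trans_lt ENNReal.coe_lt_top⟩
  let P (i : ι) : Seminorm 𝕜 E := eLpSeminorm hq (μ i) (hΛ i)
  have hP : BddAbove (range P) := by
    refine Seminorm.bddAbove_range_iff.mpr fun c => ?_
    obtain ⟨C, hC⟩ := hbdd c
    exact ⟨C, forall_mem_range.mpr fun i => ENNReal.toReal_le_coe_of_le_coe (hC i)⟩
  have hcont : Continuous ⇑(⨆ i, P i) := by
    rw [Seminorm.coe_iSup_eq hP]
    exact Seminorm.continuous_iSup P (fun i => continuous_eLpSeminorm hq (hΛ i)) hP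
  obtain ⟨C, hC0, hC⟩ := Seminorm.bound_of_continuous_normedSpace _ hcont
  refine ⟨C.toNNReal, fun i c => ?_⟩
  rw [← ofReal_norm, ← ENNReal.ofReal, ← ENNReal.ofReal_mul hC0.le,
    ENNReal.le_ofReal_iff_toReal_le (hΛ i c).2.ne (by positivity)]
  exact (Seminorm.le_def.mp (le_ciSup hP i) c).trans (hC c)

end Banach

/-- A family of functions on the disc is uniformly bounded on every smaller concentric disc. -/
def BddOnSubdiscs {ι : Type*} (F : ι → ℂ → ℂ) : Prop :=
  ∀ r < 1, ∃ K : ℝ, ∀ i, ∀ z ∈ ball (0 : ℂ) r, ‖F i z‖ ≤ K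

namespace BddOnSubdiscs

variable {ι : Type*} {F : ι → ℂ → ℂ}

lemma mul_left (hF : BddOnSubdiscs F) {g : ℂ → ℂ} (hg : HolOn g) :
    BddOnSubdiscs fun i => Mg g (F i) := by
  intro r hr
  obtain ⟨K, hK⟩ := hF r hr
  obtain ⟨C, hC⟩ := (isCompact_closedBall (0 : ℂ) r).exists_bound_of_continuousOn
    (hg.continuousOn.mono (closedBall_subset_ball hr))
  refine ⟨C * K, fun i z hz => ?_⟩
  have hgz := hC z (ball_subset_closedBall hz)
  simp only [Mg, norm_mul]
  exact mul_le_mul hgz (hK i z hz) (norm_nonneg _) ((norm_nonneg _).trans hgz)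

lemma exists_norm_deriv_le (hF : BddOnSubdiscs F) (hol : ∀ i, HolOn (F i)) {z : ℂ} (hz : z ∈ 𝔻) :
    ∃ K : ℝ, ∀ i, ‖deriv (F i) z‖ ≤ K := by
  have hz' := mem_ball_zero_iff.mp hz
  set R := (1 - ‖z‖) / 3 with hR
  have hR0 : 0 < R := by linarith
  have hsub : closedBall z R ⊆ ball 0 (‖z‖ + 2 * R) := fun w hw => by
    rw [mem_ball_zero_iff]
    linarith [norm_le_norm_add_norm_sub' w z, mem_closedBall_iff_norm.mp hw]
  obtain ⟨K, hK⟩ := hF (‖z‖ + 2 * R) (by linarith)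
  refine ⟨K / R, fun i => Complex.norm_deriv_le_of_forall_mem_sphere_norm_le hR0 ?_
    fun w hw => hK i w (hsub (sphere_subset_closedBall hw))⟩
  refine DifferentiableOn.diffContOnCl ((hol i).mono ?_)
  rw [closure_ball _ hR0.ne']
  exact hsub.trans (ball_subset_ball (by linarith))

variable {c : ι → ℂ}

lemma holOn_tsum (hF : BddOnSubdiscs F) (hol : ∀ i, HolOn (F i)) (hc : Summable fun i => ‖c i‖) :
    HolOn fun z => ∑' i, c i * F i z := by
  intro z hz
  obtain ⟨r, hzr, hr⟩ := exists_between (mem_ball_zero_iff.mp hz)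
  obtain ⟨K, hK⟩ := hF r hr
  refine ((Complex.differentiableOn_tsum_of_summable_norm (hc.mul_right K)
    (fun i => ((hol i).mono (ball_subset_ball hr.le)).const_mul (c i)) isOpen_ball
    fun i w hw => ?_).differentiableAt
      (isOpen_ball.mem_nhds (mem_ball_zero_iff.mpr hzr))).differentiableWithinAt
  rw [norm_mul]
  exact mul_le_mul_of_nonneg_left (hK i w hw) (norm_nonneg _)

lemma hasSum_deriv (hF : BddOnSubdiscs F) (hol : ∀ i, HolOn (F i)) (hc : Summable fun i => ‖c i‖)
    {z : ℂ} (hz : z ∈ 𝔻) :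
    HasSum (fun i => c i * deriv (F i) z) (deriv (fun w => ∑' i, c i * F i w) z) := by
  obtain ⟨r, hzr, hr⟩ := exists_between (mem_ball_zero_iff.mp hz)
  obtain ⟨K, hK⟩ := hF r hr
  simp only [← deriv_const_mul_field]
  refine Complex.hasSum_deriv_of_summable_norm (hc.mul_right K)
    (fun i => ((hol i).mono (ball_subset_ball hr.le)).const_mul (c i)) isOpen_ball
    (fun i w hw => ?_) (mem_ball_zero_iff.mpr hzr)
  rw [norm_mul]
  exact mul_le_mul_of_nonneg_left (hK i w hw) (norm_nonneg _)

end BddOnSubdiscs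

lemma exists_lp_one_clm_apply_eq_tsum {ι : Type*} {u : ι → ℂ} {K : ℝ} (hu : ∀ i, ‖u i‖ ≤ K) :
    ∃ Λ : lp (fun _ : ι => ℂ) 1 →L[ℂ] ℂ, ∀ c, Λ c = ∑' i, c i * u i := by
  have hmem : Memℓp u ∞ := memℓp_infty ⟨K, forall_mem_range.mpr hu⟩
  refine ⟨(lp.dualPairing 1 ∞ (fun _ => ContinuousLinearMap.mul ℂ ℂ) (K := 1)
    fun _ => ContinuousLinearMap.opNorm_mul_le ℂ ℂ).flip ⟨u, hmem⟩, fun c => rfl⟩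

lemma bddOnSubdiscs_of_besovNorm_le {ι : Type*} {F : ι → ℂ → ℂ} {p q : ℝ}
    (hpq : p.HolderConjugate q) (hol : ∀ i, HolOn (F i)) {K : ℝ≥0}
    (hnorm : ∀ i, besovNorm p (F i) ≤ K) (hzero : ∀ i, ‖F i 0‖ ≤ K) : BddOnSubdiscs F := by
  intro r hr
  set B : ℝ≥0∞ := ENNReal.ofReal (7 ^ q * (q - 1)⁻¹) ^ q⁻¹ *
    ENNReal.ofReal (Real.log (2 / (1 - r)) ^ q⁻¹) * K with hB
  have hB_top : B ≠ ⊤ := by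
    have := hpq.symm.inv_nonneg
    finiteness
  refine ⟨B.toReal + K, fun i z hz => ?_⟩
  have hzr := mem_ball_zero_iff.mp hz
  have hgrowth : ‖F i z - F i 0‖ₑ ≤ B := by
    refine (enorm_sub_le_log_rpow_mul_besovNorm hpq (hol i)
      (ball_subset_ball hr.le hz)).trans ?_
    rw [hB]
    have := hnorm i
    have := (log_two_div_pos (ball_subset_ball hr.le hz)).le
    have := hpq.symm.inv_nonneg
    have : 0 < 1 - r := by linarith
    have : 0 < 1 - ‖z‖ := by linarith
    gcongr
  calc ‖F i z‖ ≤ ‖F i z - F i 0‖ + ‖F i 0‖ := norm_le_norm_sub_add _ _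
    _ ≤ B.toReal + K := by
        refine add_le_add ?_ (hzero i)
        rw [← toReal_enorm]
        exact ENNReal.toReal_mono hB_top hgrowth

lemma besovNorm_tsum_le {p : ℝ} (hp : 1 ≤ p) {F : ℕ → ℂ → ℂ} (hF : BddOnSubdiscs F)
    (hol : ∀ n, HolOn (F n)) {c : ℕ → ℂ} (hc : Summable fun n => ‖c n‖) :
    besovNorm p (fun z => ∑' n, c n * F n z) ≤ ∑' n, ‖c n‖ₑ * besovNorm p (F n) := by
  have hsmul (n : ℕ) : ‖c n‖ₑ * besovNorm p (F n) =
      eLpNorm (c n • deriv (F n)) (ENNReal.ofReal p) (discMeasure (p - 2) 0) :=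
    (eLpNorm_const_smul ..).symm
  simp only [hsmul]
  exact eLpNorm_le_tsum_eLpNorm (ENNReal.one_le_ofReal.mpr hp)
    (fun n => ((hol n).deriv.aestronglyMeasurable _ _).const_smul (c n))
    ((ae_mem_disc _ _).mono fun z hz => hF.hasSum_deriv hol hc hz)

lemma tsum_mem_besov {p : ℝ} (hp : 1 ≤ p) {F : ℕ → ℂ → ℂ} (hF : BddOnSubdiscs F)
    (hol : ∀ n, HolOn (F n)) {K : ℝ≥0} (hnorm : ∀ n, besovNorm p (F n) ≤ K) {c : ℕ → ℂ}
    (hc : Summable fun n => ‖c n‖) : (fun z => ∑' n, c n * F n z) ∈ Besov p := by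
  refine (mem_besov_iff (by linarith)).mpr ⟨hF.holOn_tsum hol hc, ?_⟩
  have hc' : ∑' n, ‖c n‖ₑ < ⊤ := by simpa only [ofReal_norm] using hc.tsum_ofReal_lt_top
  calc besovNorm p (fun z => ∑' n, c n * F n z) ≤ ∑' n, ‖c n‖ₑ * besovNorm p (F n) :=
        besovNorm_tsum_le hp hF hol hc
    _ ≤ ∑' n, ‖c n‖ₑ * K := ENNReal.tsum_le_tsum fun n => mul_le_mul_right (hnorm n) _
    _ = (∑' n, ‖c n‖ₑ) * K := ENNReal.tsum_mul_right
    _ < ⊤ := ENNReal.mul_lt_top hc' ENNReal.coe_lt_top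

lemma summable_norm_lp_one {ι : Type*} (c : lp (fun _ : ι => ℂ) 1) : Summable fun i => ‖c i‖ := by
  simpa using (lp.memℓp c).summable (by simp)

lemma BddOnSubdiscs.exists_clm_eq_deriv_tsum {ι : Type*} {F : ι → ℂ → ℂ} (hF : BddOnSubdiscs F)
    (hol : ∀ i, HolOn (F i)) {z : ℂ} (hz : z ∈ 𝔻) :
    ∃ Λ : lp (fun _ : ι => ℂ) 1 →L[ℂ] ℂ, ∀ c, Λ c = deriv (fun w => ∑' i, c i * F i w) z := by
  obtain ⟨B, hB⟩ := hF.exists_norm_deriv_le hol hz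
  obtain ⟨Λ, hΛ⟩ := exists_lp_one_clm_apply_eq_tsum hB
  exact ⟨Λ, fun c => by rw [hΛ, (hF.hasSum_deriv hol (summable_norm_lp_one c) hz).tsum_eq]⟩

lemma HolOn.mg {f g : ℂ → ℂ} (hg : HolOn g) (hf : HolOn f) : HolOn (Mg g f) :=
  DifferentiableOn.mul hg hf

lemma mg_tsum {ι : Type*} (g : ℂ → ℂ) (c : ι → ℂ) (F : ι → ℂ → ℂ) :
    Mg g (fun z => ∑' i, c i * F i z) = fun z => ∑' i, c i * Mg g (F i) z := by
  funext z
  simp only [Mg, ← tsum_mul_left, mul_left_comm]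

lemma tsum_lp_single_mul (F : ℕ → ℂ → ℂ) (n : ℕ) :
    (fun z => ∑' m, lp.single (E := fun _ => ℂ) 1 n 1 m * F m z) = F n := by
  funext z
  rw [tsum_eq_single n fun m hm => by rw [lp.single_apply_ne _ _ _ hm, zero_mul],
    lp.single_apply_self, one_mul]

-- The uniform boundedness principle, applied to `c ↦ (∑ cₙ g Fₙ)'` on `ℓ¹`.
lemma exists_forall_qsNorm_le_of_mapsInto_nat {p q s : ℝ} (hpq : p.HolderConjugate q) {g : ℂ → ℂ}
    (hg : HolOn g) (hM : MapsInto (Mg g) (Besov p) (Qs s)) {F : ℕ → ℂ → ℂ}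
    (hol : ∀ n, HolOn (F n)) {K : ℝ≥0} (hnorm : ∀ n, besovNorm p (F n) ≤ K)
    (hzero : ∀ n, ‖F n 0‖ ≤ K) :
    ∃ C : ℝ≥0, ∀ n, ∀ a ∈ 𝔻, qsNorm s (Mg g (F n)) a ≤ C := by
  have hF : BddOnSubdiscs F := bddOnSubdiscs_of_besovNorm_le hpq hol hnorm hzero
  have hgol (n : ℕ) : HolOn (Mg g (F n)) := hg.mg (hol n)
  let S (c : lp (fun _ : ℕ => ℂ) 1) : ℂ → ℂ := fun z => ∑' n, c n * Mg g (F n) z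
  have hS (c : lp (fun _ : ℕ => ℂ) 1) : S c ∈ Qs s := by
    have h := hM _ (tsum_mem_besov hpq.lt.le hF hol hnorm (summable_norm_lp_one c))
    rwa [mg_tsum] at h
  have hΛ (z : ℂ) : ∃ Λ : lp (fun _ : ℕ => ℂ) 1 →L[ℂ] ℂ, z ∈ 𝔻 → ∀ c, Λ c = deriv (S c) z := by
    by_cases hz : z ∈ 𝔻
    · obtain ⟨Λ, hΛ⟩ := (hF.mul_left hg).exists_clm_eq_deriv_tsum hgol hz
      exact ⟨Λ, fun _ => hΛ⟩
    · exact ⟨0, fun hz' => absurd hz' hz⟩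
  choose Λ hΛ using hΛ
  have hae (a : 𝔻) (c : lp (fun _ : ℕ => ℂ) 1) :
      (fun z => Λ z c) =ᵐ[discMeasure s a] deriv (S c) :=
    (ae_mem_disc _ _).mono fun z hz => hΛ z hz c
  obtain ⟨C, hC⟩ := exists_forall_eLpNorm_le_mul_enorm (Λ := Λ) one_le_two
    (μ := fun a : 𝔻 => discMeasure s a)
    (fun a c => ((mem_qs_iff.mp (hS c)).1.deriv.aestronglyMeasurable _ _).congr (hae a c).symm)
    fun c => by
      obtain ⟨-, C, hC⟩ := mem_qs_iff.mp (hS c)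
      exact ⟨C, fun a => (eLpNorm_congr_ae (hae a c)).trans_le (hC a a.2)⟩
  refine ⟨C, fun n a ha => ?_⟩
  have hn := hC ⟨a, ha⟩ (lp.single 1 n 1)
  have hsingle : S (lp.single 1 n 1) = Mg g (F n) := tsum_lp_single_mul (fun n => Mg g (F n)) n
  rw [eLpNorm_congr_ae (hae ⟨a, ha⟩ _), hsingle] at hn
  refine hn.trans_eq ?_
  rw [← ofReal_norm, lp.norm_single one_pos, norm_one, ENNReal.ofReal_one, mul_one]

lemma exists_forall_qsNorm_le_of_mapsInto {p q s : ℝ} (hpq : p.HolderConjugate q) {g : ℂ → ℂ}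
    (hg : HolOn g) (hM : MapsInto (Mg g) (Besov p) (Qs s)) {ι : Type*} {F : ι → ℂ → ℂ}
    (hol : ∀ i, HolOn (F i)) {K : ℝ≥0} (hnorm : ∀ i, besovNorm p (F i) ≤ K)
    (hzero : ∀ i, ‖F i 0‖ ≤ K) :
    ∃ C : ℝ≥0, ∀ i, ∀ a ∈ 𝔻, qsNorm s (Mg g (F i)) a ≤ C := by
  by_contra! hunbdd
  choose i a ha hlt using fun n : ℕ => hunbdd n
  obtain ⟨C, hC⟩ := exists_forall_qsNorm_le_of_mapsInto_nat hpq hg hM (F := fun n => F (i n))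
    (fun n => hol _) (fun n => hnorm _) (fun n => hzero _)
  obtain ⟨n, hn⟩ := exists_nat_ge C
  exact (hlt n).not_ge ((hC n (a n) (ha n)).trans (by exact_mod_cast hn))

/-! ### Möbius maps as test functions -/

lemma besovNorm_phi {p : ℝ} (hp : 1 < p) {a : ℂ} (ha : a ∈ 𝔻) :
    besovNorm p (phi a) = ENNReal.ofReal ((p - 1)⁻¹ ^ p⁻¹) := by
  have hp0 : 0 < p := by linarith
  have hp1 : 0 < p - 1 := by linarith
  have h := setLIntegral_deriv_comp_phi (f := fun z => z) differentiableOn_id ha hp0.le fun _ => 1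
  simp only [deriv_id'', enorm_one, ENNReal.one_rpow, one_mul, mul_one] at h
  rw [setLIntegral_discWeight (by linarith), show p - 2 + 1 = p - 1 by ring] at h
  rw [← ENNReal.ofReal_rpow_of_pos (inv_pos.mpr hp1), h,
    ← ENNReal.rpow_rpow_inv hp0.ne' (besovNorm p (phi a)), besovNorm_rpow hp0]

lemma mem_hinf_iff {g : ℂ → ℂ} : g ∈ Hinf ↔ HolOn g ∧ ∃ C : ℝ≥0, ∀ z ∈ 𝔻, ‖g z‖ₑ ≤ C := by
  refine and_congr_right fun _ => ⟨fun ⟨C, hC⟩ => ⟨C.toNNReal, fun z hz => ?_⟩,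
    fun ⟨C, hC⟩ => ⟨C, fun z hz => ?_⟩⟩
  · rw [← ofReal_norm]
    exact ENNReal.ofReal_le_ofReal (hC z hz)
  · rw [← toReal_enorm]
    exact ENNReal.toReal_le_coe_of_le_coe (hC z hz)

lemma deriv_mg {f g : ℂ → ℂ} (hf : HolOn f) (hg : HolOn g) {z : ℂ} (hz : z ∈ 𝔻) :
    deriv (Mg g f) z = deriv g z * f z + g z * deriv f z :=
  deriv_fun_mul (hg.differentiableAt hz) (hf.differentiableAt hz)

lemma discWeight_mul_enorm_deriv_mg_phi {g : ℂ → ℂ} (hg : HolOn g) {a : ℂ} (ha : a ∈ 𝔻) :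
    discWeight 1 a * ‖deriv (Mg g (phi a)) a‖ₑ = ‖g a‖ₑ := by
  have h := norm_deriv_phi_mul ha ha
  rw [phi_self, norm_zero, zero_pow two_ne_zero, sub_zero] at h
  rw [deriv_mg (holOn_phi ha) hg ha, phi_self, mul_zero, zero_add, discWeight, Real.rpow_one,
    enorm_mul, mul_left_comm, ← ofReal_norm (deriv (phi a) a),
    ← ENNReal.ofReal_mul (one_sub_norm_sq_pos ha).le, mul_comm (1 - _), h, ENNReal.ofReal_one,
    mul_one]

lemma mem_hinf_of_mapsInto {p q s : ℝ} (hpq : p.HolderConjugate q) (hs : 0 ≤ s) {g : ℂ → ℂ}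
    (hg : HolOn g) (hM : MapsInto (Mg g) (Besov p) (Qs s)) : g ∈ Hinf := by
  obtain ⟨C, hC⟩ := exists_forall_qsNorm_le_of_mapsInto hpq hg hM (F := fun a : 𝔻 => phi a)
    (K := Real.toNNReal ((p - 1)⁻¹ ^ p⁻¹) + 1) (fun a => holOn_phi a.2)
    (fun a => (besovNorm_phi hpq.lt a.2).trans_le (ENNReal.coe_le_coe.mpr le_self_add))
    fun a => by
      rw [phi_zero_right]
      exact (mem_ball_zero_iff.mp a.2).le.trans (NNReal.one_le_coe.mpr le_add_self)
  refine mem_hinf_iff.mpr ⟨hg, Real.toNNReal (1 + s) * C, fun a ha => ?_⟩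
  have hs1 : 1 ≤ ENNReal.ofReal (1 + s) := ENNReal.one_le_ofReal.mpr (by linarith)
  have hprod : HolOn (Mg g (phi a)) := hg.mg (holOn_phi ha)
  rw [← ENNReal.pow_le_pow_left_iff two_ne_zero, ← discWeight_mul_enorm_deriv_mg_phi hg ha]
  calc (discWeight 1 a * ‖deriv (Mg g (phi a)) a‖ₑ) ^ 2
      ≤ ENNReal.ofReal (1 + s) * qsNorm s (Mg g (phi a)) a ^ 2 :=
        discWeight_mul_enorm_deriv_sq_le_qsNorm hs hprod ha
    _ ≤ ENNReal.ofReal (1 + s) ^ 2 * (C : ℝ≥0∞) ^ 2 := by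
        gcongr
        · exact le_self_pow hs1 two_ne_zero
        · exact hC ⟨a, ha⟩ a ha
    _ = _ := by rw [← mul_pow, ENNReal.coe_mul, ENNReal.ofReal]

/-! ### Logarithmic test functions -/

/-- The normalized logarithm at `b`, the extremal function for the growth of `B^p` functions at `b`.
The constant `log 4` makes its value at `b` at least `log (2 / (1 - |b|)) ^ (1 - 1 / p)`. -/
def logTest (p : ℝ) (b z : ℂ) : ℂ :=
  ((Real.log 4 : ℝ) - Complex.log (1 - conj b * z)) / (Real.log (2 / (1 - ‖b‖)) ^ p⁻¹ : ℝ)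

lemma hasDerivAt_logTest (p : ℝ) {b z : ℂ} (hb : b ∈ 𝔻) (hz : z ∈ 𝔻) :
    HasDerivAt (logTest p b)
      (conj b / (1 - conj b * z) / (Real.log (2 / (1 - ‖b‖)) ^ p⁻¹ : ℝ)) z := by
  have hslit : 1 - conj b * z ∈ slitPlane := by
    refine Or.inl ?_
    have hb' := mem_ball_zero_iff.mp hb
    have hz' := mem_ball_zero_iff.mp hz
    have hre := Complex.re_le_norm (conj b * z)
    rw [norm_mul, RCLike.norm_conj] at hre
    rw [sub_re, one_re]
    nlinarith [norm_nonneg b, norm_nonneg z]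
  have hlin : HasDerivAt (fun z => 1 - conj b * z) (-conj b) z :=
    (hasDerivAt_const_mul (conj b)).const_sub 1
  refine (((hlin.clog hslit).const_sub _).div_const _).congr_deriv ?_
  ring

lemma holOn_logTest (p : ℝ) {b : ℂ} (hb : b ∈ 𝔻) : HolOn (logTest p b) := fun _ hz =>
  (hasDerivAt_logTest p hb hz).differentiableAt.differentiableWithinAt

lemma enorm_deriv_logTest_rpow_le {p : ℝ} (hp : 0 < p) {b z : ℂ} (hb : b ∈ 𝔻) (hz : z ∈ 𝔻) :
    ‖deriv (logTest p b) z‖ₑ ^ p ≤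
      ENNReal.ofReal (Real.log (2 / (1 - ‖b‖)))⁻¹ * ‖1 - conj b * z‖ₑ⁻¹ ^ p := by
  have hL := log_two_div_pos hb
  have hne := one_sub_conj_mul_ne_zero hb hz
  have hnorm : ‖deriv (logTest p b) z‖ =
      ‖b‖ * ((Real.log (2 / (1 - ‖b‖)) ^ p⁻¹)⁻¹ * ‖1 - conj b * z‖⁻¹) := by
    rw [(hasDerivAt_logTest p hb hz).deriv, norm_div, norm_div, RCLike.norm_conj,
      Complex.norm_of_nonneg (by positivity)]
    ring
  have hb1 : ‖b‖ ^ p ≤ 1 := Real.rpow_le_one (norm_nonneg b) (mem_ball_zero_iff.mp hb).le hp.le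
  rw [← enorm_inv hne, ← ofReal_norm, ← ofReal_norm,
    ENNReal.ofReal_rpow_of_nonneg (by positivity) hp.le,
    ENNReal.ofReal_rpow_of_nonneg (by positivity) hp.le, ← ENNReal.ofReal_mul (by positivity),
    hnorm, norm_inv, Real.mul_rpow (by positivity) (by positivity),
    Real.mul_rpow (by positivity) (by positivity), Real.inv_rpow (by positivity),
    Real.rpow_inv_rpow hL.le hp.ne']
  exact ENNReal.ofReal_le_ofReal (mul_le_of_le_one_left (by positivity) hb1)

lemma besovNorm_logTest_le {p : ℝ} (hp : 1 < p) {b : ℂ} (hb : b ∈ 𝔻) :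
    besovNorm p (logTest p b) ≤ ENNReal.ofReal ((7 ^ p * (p - 1)⁻¹) ^ p⁻¹) := by
  have hp0 : 0 < p := by linarith
  have : 0 < p - 1 := by linarith
  have hL := log_two_div_pos hb
  rw [← ENNReal.ofReal_rpow_of_pos (by positivity), ENNReal.le_rpow_inv_iff hp0,
    besovNorm_rpow hp0]
  calc ∫⁻ z in 𝔻, ‖deriv (logTest p b) z‖ₑ ^ p * discWeight (p - 2) z ∂dA
      ≤ ∫⁻ z in 𝔻, ENNReal.ofReal (Real.log (2 / (1 - ‖b‖)))⁻¹ *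
          (‖1 - conj b * z‖ₑ⁻¹ ^ p * discWeight (p - 2) z) ∂dA := by
        refine setLIntegral_mono' measurableSet_ball fun z hz => ?_
        rw [← mul_assoc]
        exact mul_le_mul_left (enorm_deriv_logTest_rpow_le hp0 hb hz) _
    _ ≤ ENNReal.ofReal (Real.log (2 / (1 - ‖b‖)))⁻¹ *
          ENNReal.ofReal (7 ^ p * (p - 1)⁻¹ * Real.log (2 / (1 - ‖b‖))) := by
        rw [lintegral_const_mul' _ _ ENNReal.ofReal_ne_top]
        exact mul_le_mul_right (setLIntegral_kernel_le hp hb) _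
    _ = ENNReal.ofReal (7 ^ p * (p - 1)⁻¹) := by
        rw [← ENNReal.ofReal_mul (by positivity), mul_comm, mul_inv_cancel_right₀ hL.ne']

lemma norm_logTest_zero_le {p : ℝ} (hp : 0 ≤ p) {b : ℂ} (hb : b ∈ 𝔻) :
    ‖logTest p b 0‖ ≤ Real.log 4 / Real.log 2 ^ p⁻¹ := by
  have h2 : 0 < Real.log 2 := Real.log_pos one_lt_two
  have h4 : 0 < Real.log 4 := Real.log_pos (by norm_num)
  have hL := (log_two_div_pos hb).le
  rw [logTest, mul_zero, sub_zero, Complex.log_one, sub_zero, norm_div,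
    Complex.norm_of_nonneg h4.le, Complex.norm_of_nonneg (by positivity)]
  exact div_le_div_of_nonneg_left h4.le (by positivity)
    (Real.rpow_le_rpow h2.le (log_two_le_log_two_div hb) (inv_nonneg.mpr hp))

lemma log_rpow_le_enorm_logTest_self {p q : ℝ} (hpq : p.HolderConjugate q) {b : ℂ} (hb : b ∈ 𝔻) :
    ENNReal.ofReal (Real.log (2 / (1 - ‖b‖)) ^ q⁻¹) ≤ ‖logTest p b b‖ₑ := by
  have hL := log_two_div_pos hb
  have hb2 := one_sub_norm_sq_pos hb
  have hb1 : 0 < 1 - ‖b‖ := by linarith [mem_ball_zero_iff.mp hb]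
  have hlog : Real.log (2 / (1 - ‖b‖)) ≤ Real.log 4 - Real.log (1 - ‖b‖ ^ 2) := by
    rw [← Real.log_div (by norm_num) hb2.ne']
    refine Real.log_le_log (by positivity) ((div_le_div_iff₀ hb1 hb2).mpr ?_)
    nlinarith [norm_nonneg b]
  have hself : logTest p b b = ((Real.log 4 - Real.log (1 - ‖b‖ ^ 2)) /
      Real.log (2 / (1 - ‖b‖)) ^ p⁻¹ : ℝ) := by
    rw [logTest, Complex.conj_mul', ← ofReal_pow, ← ofReal_one, ← ofReal_sub,
      ← Complex.ofReal_log hb2.le, ← ofReal_sub, ← ofReal_div]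
  rw [hself, ← ofReal_norm, Complex.norm_real]
  refine ENNReal.ofReal_le_ofReal (le_trans ?_ (Real.le_norm_self _))
  rw [eq_sub_of_add_eq' hpq.inv_add_inv_eq_one, Real.rpow_sub hL, Real.rpow_one]
  gcongr

/-! ### Multiplication by a function in `Q_{s,log,α} ∩ H^∞` -/

lemma eLpNorm_deriv_mul_sub_le {s : ℝ} (hs : 0 < s) {f g : ℂ → ℂ} (hf : HolOn f) {M : ℝ≥0∞}
    (hM : ∀ v ∈ 𝔻, qsNorm s g v ≤ M) {a : ℂ} (ha : a ∈ 𝔻) :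
    eLpNorm (fun z => deriv g z * (f z - f a)) 2 (discMeasure s a) ≤
      ENNReal.ofReal √(4 * (1 + s) * 4 ^ s / s ^ 2) * (M * qsNorm 0 f 0) := by
  rw [← ENNReal.pow_le_pow_left_iff two_ne_zero, eLpNorm_two_discMeasure_sq, mul_pow, mul_pow,
    ← ENNReal.ofReal_pow (Real.sqrt_nonneg _), Real.sq_sqrt (by positivity)]
  exact setLIntegral_enorm_deriv_mul_sub_sq_le hs hf hM ha

lemma eLpNorm_mul_deriv_le (s : ℝ) (f : ℂ → ℂ) {g : ℂ → ℂ} {C : ℝ≥0}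
    (hC : ∀ z ∈ 𝔻, ‖g z‖ₑ ≤ C) (a : ℂ) :
    eLpNorm (fun z => g z * deriv f z) 2 (discMeasure s a) ≤ C * qsNorm s f a := by
  refine eLpNorm_le_nnreal_smul_eLpNorm_of_ae_le_mul' ?_ 2
  filter_upwards [ae_mem_disc s a] with z hz
  rw [enorm_mul]
  exact mul_le_mul_left (hC z hz) _

/-- A bound for the norm of `f ↦ (g f)' - f(a) g'`, uniform in `a`, when `g` has `Q_s` seminorm at
most `M` and supremum at most `C`. -/
def mgConst (s : ℝ) (M C : ℝ≥0) : ℝ≥0 := Real.toNNReal √(4 * (1 + s) * 4 ^ s / s ^ 2) * M + C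

lemma eLpNorm_deriv_mg_sub_le {p s : ℝ} (hp1 : 1 < p) (hp2 : p ≤ 2) (hs : 0 < s) {f g : ℂ → ℂ}
    (hf : HolOn f) (hg : HolOn g) {M C : ℝ≥0} (hM : ∀ v ∈ 𝔻, qsNorm s g v ≤ M)
    (hC : ∀ z ∈ 𝔻, ‖g z‖ₑ ≤ C) {a : ℂ} (ha : a ∈ 𝔻) :
    eLpNorm (fun z => deriv (Mg g f) z - f a * deriv g z) 2 (discMeasure s a) ≤
      mgConst s M C * besovNorm p f := by
  have hsplit : (fun z => deriv (Mg g f) z - f a * deriv g z) =ᵐ[discMeasure s a]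
      (fun z => deriv g z * (f z - f a)) + fun z => g z * deriv f z := by
    filter_upwards [ae_mem_disc s a] with z hz
    rw [deriv_mg hf hg hz, Pi.add_apply]
    ring
  rw [eLpNorm_congr_ae hsplit]
  have hzero (b : ℂ) : qsNorm 0 f b ≤ besovNorm p f := qsNorm_zero_le_besovNorm hp1 hp2 hf b
  calc _ ≤ eLpNorm (fun z => deriv g z * (f z - f a)) 2 (discMeasure s a) +
        eLpNorm (fun z => g z * deriv f z) 2 (discMeasure s a) :=
        eLpNorm_add_le ((hg.deriv.aestronglyMeasurable s a).mul
          ((hf.aestronglyMeasurable s a).sub aestronglyMeasurable_const))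
          ((hg.aestronglyMeasurable s a).mul (hf.deriv.aestronglyMeasurable s a)) one_le_two
    _ ≤ ENNReal.ofReal √(4 * (1 + s) * 4 ^ s / s ^ 2) * (M * besovNorm p f) +
        C * besovNorm p f := by
        refine add_le_add ((eLpNorm_deriv_mul_sub_le hs hf hM ha).trans ?_)
          ((eLpNorm_mul_deriv_le s f hC a).trans ?_)
        · exact mul_le_mul_right (mul_le_mul_right (hzero 0) _) _
        · exact mul_le_mul_right ((qsNorm_le_qsNorm_zero hs.le f ha a).trans (hzero a)) _
    _ = mgConst s M C * besovNorm p f := by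
        rw [mgConst, ENNReal.coe_add, ENNReal.coe_mul, add_mul, ← mul_assoc, ENNReal.ofReal]

lemma eLpNorm_const_mul_deriv (s : ℝ) (c : ℂ) (g : ℂ → ℂ) (a : ℂ) :
    eLpNorm (fun z => c * deriv g z) 2 (discMeasure s a) = ‖c‖ₑ * qsNorm s g a :=
  eLpNorm_const_smul c (deriv g) 2 (discMeasure s a)

lemma qsNorm_mg_le {p s : ℝ} (hp1 : 1 < p) (hp2 : p ≤ 2) (hs : 0 < s) {f g : ℂ → ℂ}
    (hf : HolOn f) (hg : HolOn g) {M C : ℝ≥0} (hM : ∀ v ∈ 𝔻, qsNorm s g v ≤ M)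
    (hC : ∀ z ∈ 𝔻, ‖g z‖ₑ ≤ C) {a : ℂ} (ha : a ∈ 𝔻) :
    qsNorm s (Mg g f) a ≤ ‖f a‖ₑ * qsNorm s g a + mgConst s M C * besovNorm p f := by
  have hmg := (hg.mg hf).deriv.aestronglyMeasurable s a
  have hfa := (hg.deriv.aestronglyMeasurable s a).const_mul (f a)
  calc qsNorm s (Mg g f) a
      = eLpNorm ((fun z => f a * deriv g z) + fun z => deriv (Mg g f) z - f a * deriv g z) 2
          (discMeasure s a) := by
        rw [qsNorm]
        congr 1
        ext z
        simp only [Pi.add_apply, add_sub_cancel]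
    _ ≤ _ := eLpNorm_add_le hfa (hmg.sub hfa) one_le_two
    _ ≤ _ := by
        rw [eLpNorm_const_mul_deriv]
        exact add_le_add_right (eLpNorm_deriv_mg_sub_le hp1 hp2 hs hf hg hM hC ha) _

lemma enorm_mul_qsNorm_le {p s : ℝ} (hp1 : 1 < p) (hp2 : p ≤ 2) (hs : 0 < s) {f g : ℂ → ℂ}
    (hf : HolOn f) (hg : HolOn g) {M C : ℝ≥0} (hM : ∀ v ∈ 𝔻, qsNorm s g v ≤ M)
    (hC : ∀ z ∈ 𝔻, ‖g z‖ₑ ≤ C) {a : ℂ} (ha : a ∈ 𝔻) :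
    ‖f a‖ₑ * qsNorm s g a ≤ qsNorm s (Mg g f) a + mgConst s M C * besovNorm p f := by
  have hmg := (hg.mg hf).deriv.aestronglyMeasurable s a
  have hfa := (hg.deriv.aestronglyMeasurable s a).const_mul (f a)
  calc ‖f a‖ₑ * qsNorm s g a
      = eLpNorm (deriv (Mg g f) - fun z => deriv (Mg g f) z - f a * deriv g z) 2
          (discMeasure s a) := by
        rw [← eLpNorm_const_mul_deriv]
        congr 1
        ext z
        simp only [Pi.sub_apply, sub_sub_cancel]
    _ ≤ _ := eLpNorm_sub_le hmg (hmg.sub hfa) one_le_two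
    _ ≤ _ := add_le_add_right (eLpNorm_deriv_mg_sub_le hp1 hp2 hs hf hg hM hC ha) _

lemma mem_qs_of_mapsInto {p s : ℝ} (hp : 0 < p) {g : ℂ → ℂ}
    (hM : MapsInto (Mg g) (Besov p) (Qs s)) : g ∈ Qs s := by
  have hone : (fun _ => 1) ∈ Besov p := by
    refine (mem_besov_iff hp).mpr ⟨differentiableOn_const 1, ?_⟩
    simp only [besovNorm, deriv_const', eLpNorm_zero', ENNReal.zero_lt_top]
  have hmg : Mg g (fun _ => 1) = g := funext fun z => mul_one (g z)
  exact hmg ▸ hM _ hone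

lemma mem_qsLog_of_mapsInto {p q s : ℝ} (hpq : p.HolderConjugate q) (hp2 : p ≤ 2) (hs : 0 < s)
    {g : ℂ → ℂ} (hM : MapsInto (Mg g) (Besov p) (Qs s)) : g ∈ QsLog s q⁻¹ := by
  obtain ⟨hg, M, hgM⟩ := mem_qs_iff.mp (mem_qs_of_mapsInto hpq.pos hM)
  obtain ⟨-, C, hgC⟩ := mem_hinf_iff.mp (mem_hinf_of_mapsInto hpq hs.le hg hM)
  set A := Real.toNNReal ((7 ^ p * (p - 1)⁻¹) ^ p⁻¹)
  set B := Real.toNNReal (Real.log 4 / Real.log 2 ^ p⁻¹)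
  have hnorm (b : 𝔻) : besovNorm p (logTest p b) ≤ (A + B : ℝ≥0) :=
    (besovNorm_logTest_le hpq.lt b.2).trans (ENNReal.coe_le_coe.mpr le_self_add)
  obtain ⟨N, hN⟩ := exists_forall_qsNorm_le_of_mapsInto hpq hg hM
    (fun b : 𝔻 => holOn_logTest p b.2) hnorm fun b =>
      (norm_logTest_zero_le hpq.nonneg b.2).trans <|
        (Real.le_coe_toNNReal _).trans (NNReal.coe_le_coe.mpr le_add_self)
  refine mem_qsLog_iff.mpr ⟨hg, N + mgConst s M C * (A + B), fun a ha => ?_⟩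
  calc ENNReal.ofReal (Real.log (2 / (1 - ‖a‖)) ^ q⁻¹) * qsNorm s g a
      ≤ ‖logTest p a a‖ₑ * qsNorm s g a := mul_le_mul_left (log_rpow_le_enorm_logTest_self hpq ha) _
    _ ≤ qsNorm s (Mg g (logTest p a)) a + mgConst s M C * besovNorm p (logTest p a) :=
        enorm_mul_qsNorm_le hpq.lt hp2 hs (holOn_logTest p ha) hg hgM hgC ha
    _ ≤ _ := by
        rw [ENNReal.coe_add, ENNReal.coe_mul]
        exact add_le_add (hN ⟨a, ha⟩ a ha) (mul_le_mul_right (hnorm ⟨a, ha⟩) _)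

lemma enorm_mul_qsNorm_le_of_growth {p q s : ℝ} (hpq : p.HolderConjugate q) {f g : ℂ → ℂ}
    (hf : HolOn f) {M N : ℝ≥0} (hM : ∀ v ∈ 𝔻, qsNorm s g v ≤ M)
    (hN : ∀ a ∈ 𝔻, ENNReal.ofReal (Real.log (2 / (1 - ‖a‖)) ^ q⁻¹) * qsNorm s g a ≤ N)
    {a : ℂ} (ha : a ∈ 𝔻) :
    ‖f a‖ₑ * qsNorm s g a ≤
      ‖f 0‖ₑ * M + ENNReal.ofReal (7 ^ q * (q - 1)⁻¹) ^ q⁻¹ * besovNorm p f * N := by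
  have hfa : ‖f a‖ₑ ≤ ‖f 0‖ₑ + ‖f a - f 0‖ₑ := by
    simpa only [add_sub_cancel] using enorm_add_le (f 0) (f a - f 0)
  calc ‖f a‖ₑ * qsNorm s g a
      ≤ ‖f 0‖ₑ * qsNorm s g a + ‖f a - f 0‖ₑ * qsNorm s g a := by
        rw [← add_mul]
        exact mul_le_mul_left hfa _
    _ ≤ ‖f 0‖ₑ * M + ENNReal.ofReal (7 ^ q * (q - 1)⁻¹) ^ q⁻¹ *
          ENNReal.ofReal (Real.log (2 / (1 - ‖a‖)) ^ q⁻¹) * besovNorm p f * qsNorm s g a :=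
        add_le_add (mul_le_mul_right (hM a ha) _)
          (mul_le_mul_left (enorm_sub_le_log_rpow_mul_besovNorm hpq hf ha) _)
    _ = ‖f 0‖ₑ * M + ENNReal.ofReal (7 ^ q * (q - 1)⁻¹) ^ q⁻¹ * besovNorm p f *
          (ENNReal.ofReal (Real.log (2 / (1 - ‖a‖)) ^ q⁻¹) * qsNorm s g a) := by ring
    _ ≤ _ := add_le_add_right (mul_le_mul_right (hN a ha) _) _

lemma mapsInto_of_mem_qsLog_of_mem_hinf {p q s : ℝ} (hpq : p.HolderConjugate q) (hp2 : p ≤ 2)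
    (hs : 0 < s) {g : ℂ → ℂ} (hlog : g ∈ QsLog s q⁻¹) (hbdd : g ∈ Hinf) :
    MapsInto (Mg g) (Besov p) (Qs s) := by
  intro f hf
  obtain ⟨hol, hB⟩ := (mem_besov_iff hpq.pos).mp hf
  obtain ⟨-, M, hM⟩ := mem_qs_iff.mp (qsLog_zero s ▸ qsLog_anti s hpq.symm.inv_nonneg hlog)
  obtain ⟨-, N, hN⟩ := mem_qsLog_iff.mp hlog
  obtain ⟨hg, C, hC⟩ := mem_hinf_iff.mp hbdd
  have hfin : ‖f 0‖ₑ * M + ENNReal.ofReal (7 ^ q * (q - 1)⁻¹) ^ q⁻¹ * besovNorm p f * N +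
      mgConst s M C * besovNorm p f ≠ ⊤ := by
    have := ENNReal.rpow_ne_top_of_nonneg hpq.symm.inv_nonneg
      (ENNReal.ofReal_ne_top (r := 7 ^ q * (q - 1)⁻¹))
    finiteness
  obtain ⟨K, hK⟩ := WithTop.ne_top_iff_exists.mp hfin
  refine mem_qs_iff.mpr ⟨hg.mg hol, K, fun a ha => ?_⟩
  refine le_trans ?_ hK.ge
  exact (qsNorm_mg_le hpq.lt hp2 hs hol hg hM hC ha).trans
    (add_le_add_left (enorm_mul_qsNorm_le_of_growth hpq hol hM hN ha) _)

end

theorem stmt11_general {p p' s : ℝ} (hp1 : 1 < p) (hp2 : p ≤ 2) (hpp' : 1 / p + 1 / p' = 1)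
    (hs0 : 0 < s) (g : ℂ → ℂ) :
    MapsInto (Mg g) (Besov p) (Qs s) ↔ g ∈ QsLog s (1 / p') ∩ Hinf := by
  rw [one_div, one_div] at hpp'
  have hpq : p.HolderConjugate p' := Real.holderConjugate_iff.mpr ⟨hp1, hpp'⟩
  rw [one_div]
  refine ⟨fun hM => ?_, fun h => mapsInto_of_mem_qsLog_of_mem_hinf hpq hp2 hs0 h.1 h.2⟩
  have hlog := mem_qsLog_of_mapsInto hpq hp2 hs0 hM
  exact ⟨hlog, mem_hinf_of_mapsInto hpq hs0.le hlog.1 hM⟩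

/-- For `1 < p ≤ 2`, `0 < s ≤ 1`, `p'` the conjugate exponent of `p`, and
`g` holomorphic on the unit disc: (i) if `M_g` maps `Bᵖ` into `Q_s`, then
`g ∈ Q_{s,log,1/p'} ∩ H^∞`; (ii) if `g ∈ Q_{s,log,α} ∩ H^∞` for some `α > 1/2`, then
`M_g` maps `Bᵖ` into `Q_s`. -/
theorem stmt11 (p p' s : ℝ) (hp1 : 1 < p) (hp2 : p ≤ 2) (hpp' : 1 / p + 1 / p' = 1)
    (hs0 : 0 < s) (hs1 : s ≤ 1) (g : ℂ → ℂ) (hg : HolOn g) :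
    (MapsInto (Mg g) (Besov p) (Qs s) → g ∈ QsLog s (1 / p') ∩ Hinf) ∧
    ((∃ α : ℝ, 1 / 2 < α ∧ g ∈ QsLog s α ∩ Hinf) → MapsInto (Mg g) (Besov p) (Qs s)) := by
  have h := stmt11_general hp1 hp2 hpp' hs0 g
  have hp : 1 / 2 ≤ 1 / p := one_div_le_one_div_of_le (by linarith) hp2
  exact ⟨h.1, fun ⟨α, hα, hlog, hbdd⟩ => h.2 ⟨qsLog_anti s (by linarith) hlog, hbdd⟩⟩
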